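/- arXiv:1509.04326 — 2 statements merged into one kernel-verified Lean document; each statement's English description precedes it below -/
import Mathlib

section
/- For every integer s ≥ 1 and every integer l ≥ ⌊s/2⌋ + 1, the truncated power function φ_l is strictly positive definite and radial on ℝ^s: for every finite family of pairwise distinct points x₁, …, x_N in s-dimensional Euclidean space and every vector of real coefficients c₁, …, c_N that is not identically zero, the quadratic form ∑_{i=1}^N ∑_{j=1}^N c_i·c_j·(max(1 − ‖x_i − x_j‖, 0))^l is strictly positive. -/
open MeasureTheory Set
open scoped ENNReal

/-- FTC for lower integrals of nonnegative functions. -/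
lemma tp_ftc {r T : ℝ} (h : r ≤ T) (G g : ℝ → ℝ)
    (hd : ∀ x ∈ Icc r T, HasDerivAt G (-g x) x) (hc : ContinuousOn g (Icc r T))
    (hg : ∀ x ∈ Ioo r T, 0 ≤ g x) :
    ∫⁻ x in Ioo r T, ENNReal.ofReal (g x) = ENNReal.ofReal (G r - G T) := by
  have hi : IntervalIntegrable (fun x => - g x) volume r T :=
    (ContinuousOn.intervalIntegrable (by rw [uIcc_of_le h]; exact hc.neg))
  have h1 := intervalIntegral.integral_eq_sub_of_hasDerivAt (a := r) (b := T) (f := G)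
    (f' := fun x => - g x) (by rw [uIcc_of_le h]; exact hd) hi
  rw [intervalIntegral.integral_neg] at h1
  have hi2 : IntegrableOn g (Ioo r T) :=
    (hc.integrableOn_Icc).mono_set Ioo_subset_Icc_self
  have h2 := ofReal_integral_eq_lintegral_ofReal (μ := volume.restrict (Ioo r T)) hi2
    ((ae_restrict_iff' measurableSet_Ioo).2 (ae_of_all _ hg))
  rw [← h2, ← integral_Ioc_eq_integral_Ioo, ← intervalIntegral.integral_of_le h]
  congr 1
  linarith

/-- The truncated kernel. -/
noncomputable def tpK (k : ℕ) (t x : ℝ) : ℝ≥0∞ :=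
  if x < t then ENNReal.ofReal ((t ^ 2 - x ^ 2) ^ k) else 0

/-- The truncated profile. -/
noncomputable def tpF (a b : ℕ) (r : ℝ) : ℝ≥0∞ :=
  if r < 1 then ENNReal.ofReal ((1 - r) ^ a * (r⁻¹) ^ b) else 0

lemma tpK_meas (k : ℕ) : Measurable (fun p : ℝ × ℝ => tpK k p.1 p.2) := by
  unfold tpK
  exact Measurable.ite (measurableSet_lt measurable_snd measurable_fst) (by fun_prop)
    measurable_const

lemma tp_deriv (a b : ℕ) (x : ℝ) (hx : 0 < x) :
    HasDerivAt (fun r : ℝ => (1 - r) ^ a * (r⁻¹) ^ b)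
      (-(a * ((1 - x) ^ (a - 1) * (x⁻¹) ^ b) + b * ((1 - x) ^ a * (x⁻¹) ^ (b + 1)))) x := by
  have h1 : HasDerivAt (fun r : ℝ => (1 - r) ^ a) (a * (1 - x) ^ (a - 1) * (-1)) x :=
    ((hasDerivAt_id x).const_sub 1).pow a
  have h2 : HasDerivAt (fun r : ℝ => (r⁻¹) ^ b) (b * (x⁻¹) ^ (b - 1) * (-(x ^ 2)⁻¹)) x :=
    (hasDerivAt_inv hx.ne').pow b
  refine (h1.mul h2).congr_deriv ?_
  have : (b : ℝ) * (x⁻¹) ^ (b - 1) * (-(x ^ 2)⁻¹) = - (b * (x⁻¹) ^ (b + 1)) := by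
    rcases b with _ | b
    · simp
    · rw [Nat.add_sub_cancel, ← inv_pow x 2]; ring
  rw [this]; ring

lemma tp_int (a b : ℕ) (r : ℝ) (hr : 0 < r) (hr1 : r ≤ 1) :
    ∫⁻ x in Ioo r 1, ENNReal.ofReal
      (a * ((1 - x) ^ (a - 1) * (x⁻¹) ^ b) + b * ((1 - x) ^ a * (x⁻¹) ^ (b + 1)))
      = ENNReal.ofReal ((1 - r) ^ a * (r⁻¹) ^ b - 0 ^ a) := by
  have := tp_ftc hr1 (fun r : ℝ => (1 - r) ^ a * (r⁻¹) ^ b)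
    (fun x => (a * ((1 - x) ^ (a - 1) * (x⁻¹) ^ b) + b * ((1 - x) ^ a * (x⁻¹) ^ (b + 1))))
    (fun x hx => tp_deriv a b x (hr.trans_le hx.1))
    ?_ ?_
  · rw [this]; simp
  · have : ContinuousOn (fun x : ℝ => x⁻¹) (Icc r 1) :=
      continuousOn_inv₀.mono (fun x hx => (hr.trans_le hx.1).ne')
    fun_prop
  · intro x hx
    have h1 : 0 ≤ 1 - x := by linarith [hx.2]
    have h2 : 0 ≤ x⁻¹ := inv_nonneg.2 (hr.trans hx.1).le
    positivity

lemma tpK_int (k : ℕ) (t r : ℝ) (hr : 0 < r) :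
    ∫⁻ x in Ioi r, ENNReal.ofReal (2 * x) * tpK k t x =
      ENNReal.ofReal (1 / (k + 1)) * tpK (k + 1) t r := by
  unfold tpK
  split_ifs with h
  · have h1 := tp_ftc h.le (fun x => (t ^ 2 - x ^ 2) ^ (k + 1) * (1 / (k + 1 : ℝ)))
      (fun x => 2 * x * (t ^ 2 - x ^ 2) ^ k) ?_ (by fun_prop) ?_
    · rw [← ENNReal.ofReal_mul (by positivity)]
      have e : ENNReal.ofReal (1 / (k + 1) * (t ^ 2 - r ^ 2) ^ (k + 1)) = 
        ∫⁻ x in Ioo r t, ENNReal.ofReal (2 * x * (t ^ 2 - x ^ 2) ^ k) := by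
        rw [h1]; congr 1; simp; ring
      rw [e, ← lintegral_indicator measurableSet_Ioi, ← lintegral_indicator measurableSet_Ioo]
      congr 1; ext x
      by_cases hx : r < x
      · by_cases hx2 : x < t
        · simp [indicator, hx, hx2]
          rw [← ENNReal.ofReal_ofNat, ← ENNReal.ofReal_mul (by norm_num), ← ENNReal.ofReal_mul (by linarith)]
        · simp [indicator, hx, hx2]
      · simp [indicator, hx]
    · intro x hx
      have := (((hasDerivAt_id x).pow 2).const_sub (t ^ 2)).pow (k + 1)
      refine (this.mul_const (1 / (k + 1 : ℝ))).congr_deriv ?_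
      have : (k : ℝ) + 1 ≠ 0 := by positivity
      simp
      field_simp
    · intro x hx
      have : 0 ≤ t ^ 2 - x ^ 2 := by nlinarith [hx.1, hx.2]
      have : 0 ≤ x := by linarith [hx.1]
      positivity
  · rw [setLIntegral_congr_fun (g := fun _ => 0) measurableSet_Ioi]
    · simp
    · intro x hx
      have : ¬ x < t := by have : r < x := hx; linarith
      simp [this]

lemma tp_rep (k : ℕ) : ∀ a b : ℕ, k ≤ a → ∃ μ : Measure ℝ, SFinite μ ∧
    ∀ r : ℝ, 0 < r → tpF a b r = ∫⁻ t, tpK k t r ∂μ := by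
  induction k with
  | zero =>
    intro a b _
    refine ⟨ENNReal.ofReal (0 ^ a) • Measure.dirac 1 + (volume.restrict (Iio 1)).withDensity
      (fun x => ENNReal.ofReal
      (a * ((1 - x) ^ (a - 1) * (x⁻¹) ^ b) + b * ((1 - x) ^ a * (x⁻¹) ^ (b + 1)))),
      inferInstance, ?_⟩
    intro r hr
    have hm : Measurable (fun t => tpK 0 t r) := (tpK_meas 0).comp (by fun_prop : Measurable (fun t : ℝ => (t, r)))
    rw [lintegral_add_measure, lintegral_smul_measure, lintegral_dirac,
      lintegral_withDensity_eq_lintegral_mul _ (by fun_prop) hm]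
    have e : ∀ x, (fun x => ENNReal.ofReal
      (a * ((1 - x) ^ (a - 1) * (x⁻¹) ^ b) + b * ((1 - x) ^ a * (x⁻¹) ^ (b + 1))) * tpK 0 x r) x = (Ioi r).indicator (fun x => ENNReal.ofReal
      (a * ((1 - x) ^ (a - 1) * (x⁻¹) ^ b) + b * ((1 - x) ^ a * (x⁻¹) ^ (b + 1)))) x := by
      intro x
      by_cases hx : r < x <;> simp [tpK, hx]
    simp only [Pi.mul_apply]
    rw [lintegral_congr e, lintegral_indicator measurableSet_Ioi, Measure.restrict_restrict measurableSet_Ioi,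
      Ioi_inter_Iio]
    by_cases h : r < 1
    · rw [tp_int a b r hr h.le]
      simp only [tpF, tpK, h, if_true]
      have : (0:ℝ) ^ a ≤ (1 - r) ^ a * (r⁻¹) ^ b := by
        rcases a with _ | a
        · simp only [pow_zero, one_mul]
          exact one_le_pow₀ ((one_le_inv₀ hr).2 h.le)
        · have : 0 < 1 - r := by linarith
          simp; positivity
      simp only [pow_zero, ENNReal.ofReal_one, smul_eq_mul, mul_one]
      rw [← ENNReal.ofReal_add (by positivity) (by linarith)]
      congr 1; ring
    · simp [tpF, tpK, h]
  | succ k ih =>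
    intro a b hab
    obtain ⟨μ, hμ, H1⟩ := ih (a - 1) (b + 1) (by omega)
    obtain ⟨ν, hν, H2⟩ := ih a (b + 2) (by omega)
    have hk : ENNReal.ofReal (1 / (k + 1 : ℝ)) ≠ ∞ := by simp
    set lam : Measure ℝ := ENNReal.ofReal (a / 2) • μ + ENNReal.ofReal (b / 2) • ν with hlam
    have : SFinite lam := by rw [hlam]; infer_instance
    refine ⟨ENNReal.ofReal (1 / (k + 1 : ℝ)) • lam, inferInstance, ?_⟩
    intro r hr
    have hm (c : ℝ): Measurable (fun t => tpK k t c) := (tpK_meas k).comp (by fun_prop : Measurable (fun t : ℝ => (t, c)))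
    have hm' (c : ℝ): Measurable (fun t => tpK (k+1) t c) := (tpK_meas (k+1)).comp (by fun_prop : Measurable (fun t : ℝ => (t, c)))
    rw [lintegral_smul_measure, smul_eq_mul, ← lintegral_const_mul _ (hm' r)]
    simp_rw [← tpK_int k _ r hr]
    rw [lintegral_lintegral_swap]
    swap
    · refine Measurable.aemeasurable ?_
      exact (by fun_prop : Measurable fun p : ℝ × ℝ => ENNReal.ofReal (2 * p.2)).mul (tpK_meas k)
    have e : ∀ x ∈ Ioi r, ∫⁻ t, ENNReal.ofReal (2 * x) * tpK k t x ∂lam =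
        (Iio 1).indicator (fun x => ENNReal.ofReal
      (a * ((1 - x) ^ (a - 1) * (x⁻¹) ^ b) + b * ((1 - x) ^ a * (x⁻¹) ^ (b + 1)))) x := by
      intro x hx
      have hx0 : 0 < x := hr.trans hx
      rw [lintegral_const_mul _ (hm x), hlam, lintegral_add_measure, lintegral_smul_measure,
        lintegral_smul_measure, ← H1 x hx0, ← H2 x hx0]
      unfold tpF
      by_cases h : x < 1
      · have h1 : 0 ≤ 1 - x := by linarith
        have h2 : 0 ≤ x⁻¹ := by positivity
        simp only [h, if_true, mem_Iio, indicator_of_mem, smul_eq_mul]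
        rw [← ENNReal.ofReal_mul (by positivity), ← ENNReal.ofReal_mul (by positivity),
          ← ENNReal.ofReal_add (by positivity) (by positivity), ← ENNReal.ofReal_mul (by positivity)]
        congr 1
        have : x * x⁻¹ = 1 := mul_inv_cancel₀ hx0.ne'
        rw [pow_add _ b 1, pow_add _ b 2]
        linear_combination (a * (1 - x) ^ (a - 1) * (x⁻¹) ^ b +  b * (1 - x) ^ a * (x⁻¹) ^ b * x⁻¹) * this
      · simp [h]
    rw [setLIntegral_congr_fun measurableSet_Ioi e, lintegral_indicator measurableSet_Iio,
      Measure.restrict_restrict measurableSet_Iio, Iio_inter_Ioi]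
    by_cases h : r < 1
    · rw [tp_int a b r hr h.le]
      have : a ≠ 0 := by omega
      simp [tpF, h, this]
    · simp [tpF, h]

/-- integral of the profile -/
lemma tpF_int (m : ℕ) (r : ℝ) :
    ∫⁻ a : ℝ, tpF m 0 (2 * |a| + r) = ENNReal.ofReal (1 / (m + 1)) *
      ENNReal.ofReal ((max (1 - r) 0) ^ (m + 1)) := by
  rw [← ENNReal.ofReal_mul (by positivity)]
  unfold tpF
  simp only [pow_zero, mul_one]
  rcases le_or_gt (1 - r) 0 with h | h
  · rw [max_eq_right h]
    rw [lintegral_congr (g := fun _ => 0)]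
    · simp
    · intro a
      rw [if_neg]
      have := abs_nonneg a
      linarith
  rw [max_eq_left h.le]
  have hd (ε : ℝ) (hε : ε * ε = 1) (x : ℝ) : HasDerivAt (fun x => ε * ((1 - r - ε * (2 * x)) ^ (m + 1) * (1 / (2 * (m + 1 : ℝ)))))
      (- (1 - r - ε * (2 * x)) ^ m) x := by
    have := ((((hasDerivAt_id x).const_mul 2).const_mul ε).const_sub (1 - r)).pow (m + 1)
    refine ((this.mul_const (1 / (2 * (m + 1 : ℝ)))).const_mul ε).congr_deriv ?_
    have : (m : ℝ) + 1 ≠ 0 := by positivity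
    simp
    field_simp
    linear_combination ((1 - r - x * ε * 2) ^ m) * hε
  have A := tp_ftc (r := 0) (T := (1 - r) / 2) (by linarith) _ (fun x => (1 - r - 1 * (2 * x)) ^ m)
    (fun x _ => hd 1 (by norm_num) x) (by fun_prop)
    (fun x hx => pow_nonneg (by linarith [hx.2]) _)
  have B := tp_ftc (r := -((1 - r) / 2)) (T := 0) (by linarith) _ (fun x => (1 - r - (-1) * (2 * x)) ^ m)
    (fun x _ => hd (-1) (by norm_num) x) (by fun_prop)
    (fun x hx => pow_nonneg (by linarith [hx.1]) _)
  rw [← lintegral_add_compl _ (measurableSet_Ioi (a := (0:ℝ))), compl_Ioi,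
    setLIntegral_congr Iio_ae_eq_Iic.symm]
  have A' : ∫⁻ x in Ioi (0:ℝ), (if 2 * |x| + r < 1 then ENNReal.ofReal ((1 - (2 * |x| + r)) ^ m) else 0)
     = ∫⁻ x in Ioo 0 ((1 - r) / 2), ENNReal.ofReal ((1 - r - 1 * (2 * x)) ^ m) := by
    rw [← lintegral_indicator measurableSet_Ioi, ← lintegral_indicator measurableSet_Ioo]
    congr 1; ext x
    by_cases hx : 0 < x
    · by_cases hx2 : x < (1 - r) / 2
      · have : 2 * x + r < 1 := by linarith
        simp [indicator, hx, hx2, abs_of_pos, this]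
        congr 2; ring
      · have : ¬ 2 * x + r < 1 := by linarith
        simp [indicator, hx, hx2, abs_of_pos, this]
    · simp [indicator, hx]
  have B' : ∫⁻ x in Iio (0:ℝ), (if 2 * |x| + r < 1 then ENNReal.ofReal ((1 - (2 * |x| + r)) ^ m) else 0)
     = ∫⁻ x in Ioo (-((1 - r) / 2)) 0, ENNReal.ofReal ((1 - r - (-1) * (2 * x)) ^ m) := by
    rw [← lintegral_indicator measurableSet_Iio, ← lintegral_indicator measurableSet_Ioo]
    congr 1; ext x
    by_cases hx : x < 0
    · by_cases hx2 : -((1 - r) / 2) < x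
      · have : 2 * (-x) + r < 1 := by linarith
        simp only [indicator, mem_Iio, mem_Ioo, hx, hx2, abs_of_neg, this, and_self, if_true]
        congr 2; ring
      · have : ¬ 2 * (-x) + r < 1 := by linarith
        simp only [indicator, mem_Iio, mem_Ioo, hx, hx2, abs_of_neg, this, and_true, if_true, if_false]
    · simp [indicator, hx]
  rw [A', B', A, B]
  have z1 : 1 - r - 1 * (2 * ((1 - r) / 2)) = 0 := by ring
  have z2 : 1 - r - (-1) * (2 * (-((1 - r) / 2))) = 0 := by ring
  rw [z1, z2, zero_pow (by omega), ← ENNReal.ofReal_add]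
  · congr 1; simp; field_simp; ring
  · simp; positivity
  · simp; positivity

lemma tp_rep_final (m : ℕ) : ∃ μ : Measure ℝ, SFinite μ ∧ ∀ r : ℝ, 0 ≤ r →
    ENNReal.ofReal ((max (1 - r) 0) ^ (m + 1)) =
      ENNReal.ofReal (m + 1) * ∫⁻ t, (∫⁻ a : ℝ, tpK m t (2 * |a| + r)) ∂μ := by
  obtain ⟨μ, hμ, H⟩ := tp_rep m m 0 le_rfl
  refine ⟨μ, hμ, fun r hr => ?_⟩
  rw [lintegral_lintegral_swap]
  swap
  · exact ((tpK_meas m).comp (by fun_prop : Measurable fun p : ℝ × ℝ => (p.1, 2 * |p.2| + r))).aemeasurable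
  have h1 : ∫⁻ a : ℝ, ∫⁻ t, tpK m t (2 * |a| + r) ∂μ = ∫⁻ a : ℝ, tpF m 0 (2 * |a| + r) := by
    apply lintegral_congr_ae
    have : ∀ᵐ a : ℝ, a ≠ 0 := by simp [ae_iff]
    filter_upwards [this] with a ha
    have := abs_pos.2 ha
    rw [H _ (by linarith)]
  rw [h1, tpF_int, ← mul_assoc, ← ENNReal.ofReal_mul (by positivity)]
  have : ((m : ℝ) + 1) * (1 / (m + 1)) = 1 := by field_simp
  rw [this, ENNReal.ofReal_one, one_mul]



/-- Volume of a Euclidean ball in even dimension, in coordinates. -/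
lemma tp_slice (m : ℕ) (R : ℝ) :
    volume {y : Fin (2 * m) → ℝ | ∑ i, y i ^ 2 < R} =
      if 0 < R then volume (Metric.ball (0 : EuclideanSpace ℝ (Fin (2 * m))) 1) * ENNReal.ofReal (R ^ m)
      else 0 := by
  split_ifs with h
  · have h0 : 0 < √R := Real.sqrt_pos.2 h
    have h1 := Measure.addHaar_ball_of_pos volume (0 : EuclideanSpace ℝ (Fin (2 * m))) h0
    rw [finrank_euclideanSpace_fin, pow_mul, Real.sq_sqrt h.le] at h1
    rw [mul_comm _ (ENNReal.ofReal _), ← h1, ← (PiLp.volume_preserving_toLp (Fin (2 * m))).measure_preimage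
      measurableSet_ball.nullMeasurableSet]
    congr 1
    ext y
    simp [EuclideanSpace.norm_eq, Real.sqrt_lt_sqrt_iff_of_pos h]
  · convert measure_empty (μ := (volume : Measure (Fin (2 * m) → ℝ)))
    ext y
    have : 0 ≤ ∑ i, y i ^ 2 := Finset.sum_nonneg (fun i _ => sq_nonneg _)
    simp
    linarith

lemma tp_lens_std (m : ℕ) (ρ h : ℝ) (hρ : 0 < ρ) (hh : 0 ≤ h) :
    volume (Metric.ball (EuclideanSpace.single (0 : Fin (2 * m + 1)) h) ρ ∩
      Metric.ball (-EuclideanSpace.single (0 : Fin (2 * m + 1)) h) ρ) =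
    ∫⁻ a : ℝ, volume {y : Fin (2 * m) → ℝ | ∑ i, y i ^ 2 < ρ ^ 2 - (|a| + h) ^ 2} := by
  rw [← (PiLp.volume_preserving_toLp (Fin (2 * m + 1))).measure_preimage
      (measurableSet_ball.inter measurableSet_ball).nullMeasurableSet]
  have hS : MeasurableSet {p : ℝ × (Fin (2 * m) → ℝ) | ∑ i, p.2 i ^ 2 < ρ ^ 2 - (|p.1| + h) ^ 2} :=
    measurableSet_lt (by fun_prop) (by fun_prop)
  have h2 := (volume_preserving_piFinSuccAbove (fun _ : Fin (2 * m + 1) => ℝ) 0).measure_preimage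
    hS.nullMeasurableSet
  rw [Measure.volume_eq_prod, Measure.prod_apply hS] at h2
  refine Eq.trans ?_ h2
  congr 1
  ext y
  simp only [mem_preimage, mem_inter_iff, Metric.mem_ball, mem_ofPred_eq, dist_eq_norm,
    EuclideanSpace.norm_eq, Fin.sum_univ_succ, MeasurableEquiv.piFinSuccAbove]
  rw [Real.sqrt_lt' hρ, Real.sqrt_lt' hρ]
  simp [Fin.insertNthEquiv, Fin.tail]
  have : 0 ≤ ∑ i : Fin (2 * m), y i.succ ^ 2 := Finset.sum_nonneg (fun i _ => sq_nonneg _)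
  rcases abs_cases (y 0) with ⟨e, _⟩ | ⟨e, _⟩ <;> rw [e] <;> constructor
  · rintro ⟨h1, h2⟩; nlinarith
  · intro h1; constructor <;> nlinarith
  · rintro ⟨h1, h2⟩; nlinarith
  · intro h1; constructor <;> nlinarith

lemma tp_lens (m : ℕ) (p q : EuclideanSpace ℝ (Fin (2 * m + 1))) (ρ : ℝ) (hρ : 0 < ρ) :
    volume (Metric.ball p ρ ∩ Metric.ball q ρ) =
    ∫⁻ a : ℝ, volume {y : Fin (2 * m) → ℝ | ∑ i, y i ^ 2 < ρ ^ 2 - (|a| + ‖p - q‖ / 2) ^ 2} := by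
  rw [← tp_lens_std m ρ (‖p - q‖ / 2) hρ (by positivity)]
  set w : EuclideanSpace ℝ (Fin (2 * m + 1)) := EuclideanSpace.single 0 (‖p - q‖ / 2) with hw
  set v : EuclideanSpace ℝ (Fin (2 * m + 1)) := (2⁻¹ : ℝ) • (p - q) with hv
  have hvw : ‖v‖ = ‖w‖ := by
    rw [hv, hw, norm_smul]; simp; ring
  set L := Submodule.reflection (ℝ ∙ (v - w))ᗮ with hL
  have hLv : L v = w := Submodule.reflection_sub hvw
  rw [← measure_preimage_add_right volume ((2⁻¹ : ℝ) • (p + q)) (Metric.ball p ρ ∩ Metric.ball q ρ)]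
  refine Eq.trans ?_ ((L.measurePreserving).measure_preimage
      (measurableSet_ball.inter measurableSet_ball).nullMeasurableSet)
  congr 1
  ext z
  simp only [mem_preimage, mem_inter_iff, Metric.mem_ball, dist_eq_norm]
  rw [← hLv, ← map_neg, ← map_sub, ← map_sub, L.norm_map, L.norm_map]
  have e1 : z + (2⁻¹ : ℝ) • (p + q) - p = z - v := by rw [hv]; module
  have e2 : z + (2⁻¹ : ℝ) • (p + q) - q = z - -v := by rw [hv]; module
  rw [e1, e2]

lemma tp_vol (m : ℕ) : ∃ C : ℝ≥0∞, C ≠ 0 ∧ C ≠ ∞ ∧ 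
    ∀ (p q : EuclideanSpace ℝ (Fin (2 * m + 1))) (t : ℝ),
    ∫⁻ a : ℝ, tpK m t (2 * |a| + ‖p - q‖) = C * volume (Metric.ball p (t / 2) ∩ Metric.ball q (t / 2)) := by
  set V := volume (Metric.ball (0 : EuclideanSpace ℝ (Fin (2 * m))) 1) with hV
  have hV0 : V ≠ 0 := (Metric.measure_ball_pos volume _ one_pos).ne'
  have hV1 : V ≠ ∞ := measure_ball_lt_top.ne
  have h4 : ENNReal.ofReal (4 ^ m) ≠ 0 := by simp
  refine ⟨ENNReal.ofReal (4 ^ m) * V⁻¹, mul_ne_zero h4 (ENNReal.inv_ne_zero.2 hV1),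
    ENNReal.mul_ne_top ENNReal.ofReal_ne_top (ENNReal.inv_ne_top.2 hV0), ?_⟩
  intro p q t
  rcases le_or_gt t 0 with ht | ht
  · rw [Metric.ball_eq_empty.2 (by linarith), empty_inter, measure_empty, mul_zero]
    rw [lintegral_congr (g := fun _ => 0)]
    · simp
    · intro a
      have := abs_nonneg a
      have := norm_nonneg (p - q)
      rw [tpK, if_neg (by linarith)]
  · rw [tp_lens m p q (t / 2) (by linarith), ← lintegral_const_mul' _ _
      (ENNReal.mul_ne_top ENNReal.ofReal_ne_top (ENNReal.inv_ne_top.2 hV0))]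
    refine lintegral_congr fun a => ?_
    rw [tp_slice, tpK, ← hV]
    have ha := abs_nonneg a
    have hn := norm_nonneg (p - q)
    have e : (t / 2) ^ 2 - (|a| + ‖p - q‖ / 2) ^ 2 = (t ^ 2 - (2 * |a| + ‖p - q‖) ^ 2) / 4 := by ring
    rw [e]
    by_cases h : 2 * |a| + ‖p - q‖ < t
    · have : 0 < (t ^ 2 - (2 * |a| + ‖p - q‖) ^ 2) / 4 := by nlinarith
      rw [if_pos h, if_pos this, mul_assoc, ← mul_assoc V⁻¹, ENNReal.inv_mul_cancel hV0 hV1, one_mul,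
        ← ENNReal.ofReal_mul (by positivity), ← mul_pow]
      congr 2; ring
    · have : ¬ 0 < (t ^ 2 - (2 * |a| + ‖p - q‖) ^ 2) / 4 := by nlinarith
      rw [if_neg h, if_neg this, mul_zero]


/-- Indicators of equal-radius balls with distinct centres are linearly independent a.e. -/
lemma tp_indep {n N : ℕ} (x : Fin N → EuclideanSpace ℝ (Fin (n + 1))) (hx : Function.Injective x)
    (c : Fin N → ℝ) (hc : c ≠ 0) (ρ : ℝ) (hρ : 0 < ρ)
    (h : ∀ᵐ z, ∑ i, c i * (Metric.ball (x i) ρ).indicator (fun _ => (1 : ℝ)) z = 0) : False := by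
  obtain ⟨i₀, hi₀⟩ := Function.ne_iff.1 hc
  set v : EuclideanSpace ℝ (Fin (n + 1)) := EuclideanSpace.single 0 1 with hv
  have hv1 : ‖v‖ = 1 := by simp [hv]
  obtain ⟨i, hi, hmax⟩ := Finset.exists_max_image (Finset.univ.filter fun i => c i ≠ 0)
    (fun i => inner ℝ v (x i)) ⟨i₀, by simpa using hi₀⟩
  simp only [Finset.mem_filter, Finset.mem_univ, true_and] at hi hmax
  set γ : ℝ → EuclideanSpace ℝ (Fin (n + 1)) := fun s => x i + s • v with hγ
  have hγc : Continuous γ := by fun_prop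
  have hfar : ∀ j, c j ≠ 0 → j ≠ i → ρ < ‖γ ρ - x j‖ := by
    intro j hj hji
    have h1 : γ ρ - x j = (x i - x j) + ρ • v := by simp only [hγ]; abel
    have h2 : 0 < ‖x i - x j‖ := norm_pos_iff.2 (sub_ne_zero.2 fun e => hji (hx e).symm)
    have h3 : 0 ≤ inner ℝ (x i - x j) v := by
      rw [real_inner_comm, inner_sub_right]; linarith [hmax j hj]
    rw [h1]
    have h4 := norm_add_sq_real (x i - x j) (ρ • v)
    rw [inner_smul_right, norm_smul, hv1, mul_one, Real.norm_eq_abs, sq_abs] at h4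
    nlinarith [norm_nonneg (x i - x j + ρ • v), mul_nonneg hρ.le h3]
  have hopen : ∀ᶠ s in nhds ρ, ∀ j, c j ≠ 0 → j ≠ i → ρ < ‖γ s - x j‖ := by
    rw [Filter.eventually_all]
    intro j
    by_cases hj : c j ≠ 0 ∧ j ≠ i
    · have : Continuous fun s => ‖γ s - x j‖ := by fun_prop
      filter_upwards [(this.tendsto ρ).eventually (lt_mem_nhds (hfar j hj.1 hj.2))] with s hs _ _
      exact hs
    · exact Filter.Eventually.of_forall fun s h1 h2 => absurd ⟨h1, h2⟩ hj
  have h5 : ∀ᶠ s in nhdsWithin ρ (Iio ρ), s ∈ Ioo 0 ρ := Ioo_mem_nhdsLT hρ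
  obtain ⟨s, hs1, hs2⟩ := ((hopen.filter_mono nhdsWithin_le_nhds).and h5).exists
  have hU : IsOpen {z | ‖z - x i‖ < ρ ∧ ∀ j, c j ≠ 0 → j ≠ i → ρ < ‖z - x j‖} := by
    refine IsOpen.and (isOpen_lt (by fun_prop) continuous_const) ?_
    simp only [ofPred_forall]
    refine isOpen_iInter_of_finite fun j => isOpen_iInter_of_finite fun _ =>
      isOpen_iInter_of_finite fun _ => isOpen_lt continuous_const (by fun_prop)
  have hpos := hU.measure_pos volume ⟨γ s, by
    refine ⟨?_, hs1⟩
    simp only [hγ, add_sub_cancel_left, norm_smul, hv1, mul_one, Real.norm_eq_abs]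
    rw [abs_of_pos hs2.1]; exact hs2.2⟩
  refine hpos.ne' (measure_mono_null ?_ (ae_iff.1 h))
  intro z hz
  simp only [mem_ofPred_eq] at hz ⊢
  rw [Finset.sum_eq_single i]
  · simp [indicator, dist_eq_norm, hz.1, hi]
  · intro j _ hji
    by_cases hj : c j = 0
    · simp [hj]
    · simp [indicator, dist_eq_norm, not_lt.2 (hz.2 j hj hji).le]
  · simp

lemma tp_main_aux {n N : ℕ} (φ : ℝ → ℝ) (hφ : ∀ r, 0 ≤ φ r) (hφ0 : 0 < φ 0) (μ : Measure ℝ) [SFinite μ] (D : ℝ≥0∞)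
    (hrep : ∀ p q : EuclideanSpace ℝ (Fin (n + 1)), ENNReal.ofReal (φ ‖p - q‖) =
      D * ∫⁻ t, volume (Metric.ball p (t / 2) ∩ Metric.ball q (t / 2)) ∂μ)
    (x : Fin N → EuclideanSpace ℝ (Fin (n + 1))) (hx : Function.Injective x)
    (c : Fin N → ℝ) (hc : c ≠ 0) :
    0 < ∑ i : Fin N, ∑ j : Fin N, c i * c j * φ ‖x i - x j‖ := by
  set ν : Measure (ℝ × EuclideanSpace ℝ (Fin (n + 1))) := (D • μ).prod volume with hν
  set S : EuclideanSpace ℝ (Fin (n + 1)) → Set (ℝ × EuclideanSpace ℝ (Fin (n + 1))) :=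
    fun p => {w | dist w.2 p < w.1 / 2} with hS
  have hSm : ∀ p, MeasurableSet (S p) := fun p => measurableSet_lt (by fun_prop) (by fun_prop)
  have hνS : ∀ p q, ν (S p ∩ S q) = ENNReal.ofReal (φ ‖p - q‖) := by
    intro p q
    rw [hν, Measure.prod_apply ((hSm p).inter (hSm q)), lintegral_smul_measure, hrep]
    rfl
  have hreal : ∀ p q, ∫ w, (S p).indicator (fun _ => (1:ℝ)) w * (S q).indicator (fun _ => (1:ℝ)) w ∂ν
      = φ ‖p - q‖ := by
    intro p q
    have : (fun w => (S p).indicator (fun _ => (1:ℝ)) w * (S q).indicator (fun _ => (1:ℝ)) w)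
      = (S p ∩ S q).indicator (fun _ => (1:ℝ)) := by
      ext w; by_cases h1 : w ∈ S p <;> by_cases h2 : w ∈ S q <;> simp [h1, h2]
    rw [this, integral_indicator ((hSm p).inter (hSm q))]
    simp [measureReal_def, hνS, hφ]
  have hint : ∀ p q, Integrable (fun w => (S p).indicator (fun _ => (1:ℝ)) w * (S q).indicator (fun _ => (1:ℝ)) w) ν := by
    intro p q
    have : (fun w => (S p).indicator (fun _ => (1:ℝ)) w * (S q).indicator (fun _ => (1:ℝ)) w)
      = (S p ∩ S q).indicator (fun _ => (1:ℝ)) := by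
      ext w; by_cases h1 : w ∈ S p <;> by_cases h2 : w ∈ S q <;> simp [h1, h2]
    rw [this, integrable_indicator_iff ((hSm p).inter (hSm q))]
    exact integrableOn_const (by rw [hνS]; exact ENNReal.ofReal_ne_top)
  set F : ℝ × EuclideanSpace ℝ (Fin (n + 1)) → ℝ :=
    fun w => ∑ i, c i * (S (x i)).indicator (fun _ => (1:ℝ)) w with hF
  have hFsq : (fun w => F w ^ 2) = fun w => ∑ i, ∑ j, c i * c j *
      ((S (x i)).indicator (fun _ => (1:ℝ)) w * (S (x j)).indicator (fun _ => (1:ℝ)) w) := by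
    ext w
    rw [hF, sq, Finset.sum_mul_sum]
    refine Finset.sum_congr rfl fun i _ => Finset.sum_congr rfl fun j _ => by ring
  have hFint : Integrable (fun w => F w ^ 2) ν := by
    rw [hFsq]
    exact integrable_finsetSum _ fun i _ => integrable_finsetSum _ fun j _ => (hint _ _).const_mul _
  have hQ : ∑ i : Fin N, ∑ j : Fin N, c i * c j * φ ‖x i - x j‖ = ∫ w, F w ^ 2 ∂ν := by
    rw [hFsq, integral_finsetSum _ fun i _ => integrable_finsetSum _ fun j _ => (hint _ _).const_mul _]
    refine Finset.sum_congr rfl fun i _ => ?_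
    rw [integral_finsetSum _ fun j _ => (hint _ _).const_mul _]
    refine Finset.sum_congr rfl fun j _ => ?_
    rw [integral_const_mul, hreal]
  rw [hQ]
  have hnn : 0 ≤ ∫ w, F w ^ 2 ∂ν := integral_nonneg fun w => sq_nonneg _
  refine lt_of_le_of_ne hnn fun h0 => ?_
  have h1 := (integral_eq_zero_iff_of_nonneg (fun w => sq_nonneg (F w)) hFint).1 h0.symm
  have h2 : ∀ᵐ w ∂ν, F w = 0 := by
    filter_upwards [h1] with w hw
    simpa using hw
  have h3 := Measure.ae_ae_of_ae_prod h2
  have h4 : ∀ᵐ t ∂(D • μ), t ≤ 0 := by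
    filter_upwards [h3] with t ht
    by_contra! htp
    exact tp_indep x hx c hc (t / 2) (by linarith) ht
  have h5 := hrep 0 0
  have h6 : ν (S 0 ∩ S 0) = 0 := by
    rw [hν, Measure.prod_apply ((hSm 0).inter (hSm 0)), lintegral_congr_ae (g := fun _ => 0)]
    · simp
    · filter_upwards [h4] with t ht
      convert measure_empty (μ := (volume : Measure (EuclideanSpace ℝ (Fin (n + 1)))))
      ext z
      have := dist_nonneg (x := z) (y := 0)
      simp only [hS, mem_preimage, mem_inter_iff, mem_ofPred_eq, mem_empty_iff_false, and_self, iff_false]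
      linarith
  rw [hνS] at h6
  simp at h6
  linarith

lemma tp_embed (s n : ℕ) (h : s ≤ n) :
    ∃ L : EuclideanSpace ℝ (Fin s) →ₗᵢ[ℝ] EuclideanSpace ℝ (Fin n), True := by
  set b := EuclideanSpace.basisFun (Fin s) ℝ
  set b' := EuclideanSpace.basisFun (Fin n) ℝ
  refine ⟨(b.toBasis.constr ℝ (fun i => b' (Fin.castLE h i))).isometryOfOrthonormal (v := b.toBasis)
    (by simpa using b.orthonormal) ?_, trivial⟩
  have : (b.toBasis.constr ℝ (fun i => b' (Fin.castLE h i))) ∘ b.toBasis = b' ∘ Fin.castLE h := by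
    ext1 i; simp
  rw [this]
  exact b'.orthonormal.comp _ (Fin.castLE_injective h)

/-- For every integer `s ≥ 1` and every integer `l ≥ ⌊s/2⌋ + 1`, the truncated power
function `φ_l r = (max (1-r) 0)^l` is strictly positive definite and radial on `ℝ^s`:
for every finite family of pairwise distinct points `x₁, …, x_N` in `s`-dimensional
Euclidean space and every nonzero vector of coefficients `c₁, …, c_N`,
`∑ i ∑ j, c i * c j * (max (1 - ‖x i - x j‖) 0)^l > 0`. -/
theorem truncated_power_strictly_positive_definite
    (s : ℕ) (hs : 1 ≤ s) (l : ℕ) (hl : s / 2 + 1 ≤ l)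
    (N : ℕ) (x : Fin N → EuclideanSpace ℝ (Fin s)) (hx : Function.Injective x)
    (c : Fin N → ℝ) (hc : c ≠ 0) :
    0 < ∑ i : Fin N, ∑ j : Fin N, c i * c j * (max (1 - ‖x i - x j‖) 0) ^ l := by
  obtain ⟨m, rfl⟩ : ∃ m, l = m + 1 := ⟨l - 1, by omega⟩
  obtain ⟨L, -⟩ := tp_embed s (2 * m + 1) (by omega)
  obtain ⟨μ, hμ, hrep⟩ := tp_rep_final m
  obtain ⟨C, hC0, hC1, hC⟩ := tp_vol m
  have key := tp_main_aux (n := 2 * m) (fun r => (max (1 - r) 0) ^ (m + 1))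
    (fun r => by positivity) (by simp) μ (ENNReal.ofReal (m + 1) * C)
    (fun p q => by
      rw [hrep _ (norm_nonneg _), mul_assoc, ← lintegral_const_mul' _ _ hC1]
      congr 1
      exact lintegral_congr fun t => hC p q t)
    (fun i => L (x i)) (L.injective.comp hx) c hc
  simpa only [← map_sub, L.norm_map] using key
end

section
/- For every integer s ≥ 1 and every integer k ≥ 0, the Wendland function φ_{s,k} = I^k φ_l with l = ⌊s/2⌋ + k + 1 is strictly positive definite and radial on ℝ^s: for every finite family of pairwise distinct points x₁, …, x_N in s-dimensional Euclidean space and every vector of real coefficients c₁, …, c_N that is not identically zero, ∑_{i=1}^N ∑_{j=1}^N c_i·c_j·φ_{s,k}(‖x_i − x_j‖) > 0. -/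
open MeasureTheory

/-- The montée operator: `(I φ) r = ∫ t in (r, ∞), t * φ t`. -/
noncomputable def montee (φ : ℝ → ℝ) (r : ℝ) : ℝ := ∫ t in Set.Ioi r, t * φ t

/-- The Wendland function `φ_{s,k} = I^k φ_{⌊s/2⌋+k+1}`, where
`φ_l r = (max (1-r) 0)^l` is the truncated power function. -/
noncomputable def wendland (s k : ℕ) : ℝ → ℝ :=
  montee^[k] (fun r => (max (1 - r) 0) ^ (s / 2 + k + 1))

open scoped ENNReal

/-- A function on `(0,1/4)` whose iterated negative derivatives are nonnegative. -/
def Vp : ℕ → (ℝ → ℝ) → Prop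
  | 0, f => (∀ u ∈ Set.Ioo (0:ℝ) (1/4), 0 ≤ f u) ∧ AntitoneOn f (Set.Ioo (0:ℝ) (1/4))
  | j+1, f => (∀ u ∈ Set.Ioo (0:ℝ) (1/4), 0 ≤ f u) ∧ ContinuousOn f (Set.Ioc (0:ℝ) (1/4)) ∧
      f (1/4) = 0 ∧ ∃ f' : ℝ → ℝ, Vp j f' ∧
        ∀ u ∈ Set.Ioo (0:ℝ) (1/4), HasDerivAt f (-f' u) u

lemma Vp.nonneg {j : ℕ} {f : ℝ → ℝ} (h : Vp j f) : ∀ u ∈ Set.Ioo (0:ℝ) (1/4), 0 ≤ f u := by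
  cases j <;> exact h.1

lemma Vp.antitoneOn {j : ℕ} {f : ℝ → ℝ} (h : Vp j f) : AntitoneOn f (Set.Ioo (0:ℝ) (1/4)) := by
  cases j with
  | zero => exact h.2
  | succ j =>
    obtain ⟨h1, h2, h3, f', h4, h5⟩ := h
    apply antitoneOn_of_deriv_nonpos (convex_Ioo _ _)
    · exact h2.mono Set.Ioo_subset_Ioc_self
    · rw [interior_Ioo]
      intro u hu
      exact (h5 u hu).differentiableAt.differentiableWithinAt
    · rw [interior_Ioo]
      intro u hu
      rw [(h5 u hu).deriv]
      linarith [h4.nonneg u hu]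

lemma Vp.weaken {j : ℕ} : ∀ {f : ℝ → ℝ}, Vp (j+1) f → Vp j f := by
  induction j with
  | zero => intro f h; exact ⟨h.nonneg, h.antitoneOn⟩
  | succ j ih =>
    intro f h
    obtain ⟨h1, h2, h3, f', h4, h5⟩ := h
    exact ⟨h1, h2, h3, f', ih h4, h5⟩

lemma Vp.add {j : ℕ} : ∀ {f g : ℝ → ℝ}, Vp j f → Vp j g → Vp j (fun u => f u + g u) := by
  induction j with
  | zero =>
    intro f g hf hg
    exact ⟨fun u hu => add_nonneg (hf.1 u hu) (hg.1 u hu), hf.2.add hg.2⟩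
  | succ j ih =>
    rintro f g ⟨h1, h2, h3, f', h4, h5⟩ ⟨k1, k2, k3, g', k4, k5⟩
    refine ⟨fun u hu => add_nonneg (h1 u hu) (k1 u hu), h2.add k2, by simp only [h3, k3, add_zero], _, ih h4 k4, ?_⟩
    intro u hu
    convert! (h5 u hu).add (k5 u hu) using 1
    ring

lemma Vp.smul {j : ℕ} {c : ℝ} (hc : 0 ≤ c) : ∀ {f : ℝ → ℝ}, Vp j f → Vp j (fun u => c * f u) := by
  induction j with
  | zero =>
    intro f hf
    exact ⟨fun u hu => mul_nonneg hc (hf.1 u hu),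
      fun a ha b hb hab => mul_le_mul_of_nonneg_left (hf.2 ha hb hab) hc⟩
  | succ j ih =>
    rintro f ⟨h1, h2, h3, f', h4, h5⟩
    refine ⟨fun u hu => mul_nonneg hc (h1 u hu), h2.const_mul c, by simp only [h3, mul_zero], _, ih h4, ?_⟩
    intro u hu
    convert! (h5 u hu).const_mul c using 1
    ring

lemma Vp.mul_rpow {j : ℕ} : ∀ {f : ℝ → ℝ} (a : ℝ), 0 ≤ a → Vp j f →
    Vp j (fun u => f u * u ^ (-a)) := by
  induction j with
  | zero =>
    intro f a ha hf
    refine ⟨fun u hu => mul_nonneg (hf.1 u hu) (Real.rpow_nonneg hu.1.le _), ?_⟩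
    intro u hu v hv huv
    exact mul_le_mul (hf.2 hu hv huv) (Real.rpow_le_rpow_of_nonpos hu.1 huv (by linarith))
      (Real.rpow_nonneg hv.1.le _) (hf.1 u hu)
  | succ j ih =>
    intro f a ha hf
    have hw := hf.weaken
    obtain ⟨h1, h2, h3, f', h4, h5⟩ := hf
    refine ⟨fun u hu => mul_nonneg (h1 u hu) (Real.rpow_nonneg hu.1.le _), ?_, by simp only [h3, zero_mul],
      _, (ih a ha h4).add ((ih (a+1) (by linarith) hw).smul ha), ?_⟩
    · apply h2.mul
      intro u hu
      exact (Real.continuousAt_rpow_const _ _ (Or.inl hu.1.ne')).continuousWithinAt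
    · intro u hu
      convert! (h5 u hu).mul (Real.hasDerivAt_rpow_const (p := -a) (Or.inl hu.1.ne')) using 1
      rw [show -(a+1) = -a - 1 by ring]
      ring

lemma Vp_base (m : ℕ) : Vp m (fun u => (1 - 2 * Real.sqrt u) ^ m) := by
  have hs : ∀ u ∈ Set.Ioo (0:ℝ) (1/4), 0 ≤ 1 - 2 * Real.sqrt u := by
    intro u hu
    have : Real.sqrt u ≤ 1/2 := by
      rw [Real.sqrt_le_left (by norm_num)]; linarith [hu.2]
    linarith
  induction m with
  | zero => exact ⟨fun u hu => by simp, fun a _ b _ _ => by simp⟩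
  | succ m ih =>
    refine ⟨fun u hu => pow_nonneg (hs u hu) _, by fun_prop, ?_, _,
      (ih.mul_rpow (1/2) (by norm_num)).smul (c := m+1) (by positivity), ?_⟩
    · have : Real.sqrt (1/4) = 1/2 := by
        rw [show (1/4:ℝ) = (1/2)^2 by norm_num, Real.sqrt_sq (by norm_num)]
      simp only [this]; norm_num
    · intro u hu
      have h1 := (((Real.hasDerivAt_sqrt hu.1.ne').const_mul 2).const_sub 1).pow (m+1)
      convert! h1 using 1
      rw [Real.rpow_neg hu.1.le, ← Real.sqrt_eq_rpow]
      have : Real.sqrt u ≠ 0 := (Real.sqrt_pos.2 hu.1).ne'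
      push_cast
      field_simp

/-- extension of a function on `(0,1/4)` -/
noncomputable def extW (f : ℝ → ℝ) (u : ℝ) : ℝ≥0∞ :=
  if u ≤ 0 then ⊤ else if u < 1/4 then ENNReal.ofReal (f u) else 0

lemma Vp.ext_antitone {j : ℕ} {f : ℝ → ℝ} (h : Vp j f) : Antitone (extW f) := by
  intro u v huv
  unfold extW
  split_ifs <;> first | exact le_top | exact bot_le | skip
  all_goals try (exfalso; linarith)
  rename_i a b c d
  exact ENNReal.ofReal_le_ofReal (h.antitoneOn ⟨not_le.1 c, d⟩ ⟨not_le.1 a, b⟩ huv)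

/-- tail integral -/
noncomputable def Jop (g : ℝ → ℝ≥0∞) (u : ℝ) : ℝ≥0∞ := ∫⁻ t in Set.Ioi u, g t

lemma Jop_congr {f g : ℝ → ℝ≥0∞} {u : ℝ} (h : ∀ t, u < t → f t = g t) : Jop f u = Jop g u :=
  setLIntegral_congr_fun measurableSet_Ioi h

lemma Jop_antitone (g : ℝ → ℝ≥0∞) : Antitone (Jop g) :=
  fun _ _ h => lintegral_mono_set (Set.Ioi_subset_Ioi h)

lemma Jop_ext {f f' : ℝ → ℝ} {j : ℕ} 
    (h2 : ContinuousOn f (Set.Ioc (0:ℝ) (1/4)))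
    (h3 : f (1/4) = 0) (h4 : Vp j f')
    (h5 : ∀ u ∈ Set.Ioo (0:ℝ) (1/4), HasDerivAt f (-f' u) u) (u : ℝ) (hu : 0 < u) :
    Jop (extW f') u = extW f u := by
  unfold Jop
  by_cases hub : u < 1/4
  · have e1 : ∫⁻ t in Set.Ioi u, extW f' t = ∫⁻ t in Set.Ioo u (1/4), ENNReal.ofReal (f' t) := by
      rw [← lintegral_indicator measurableSet_Ioi, ← lintegral_indicator measurableSet_Ioo]
      congr 1
      ext t
      simp only [Set.indicator, Set.mem_Ioi, Set.mem_Ioo, extW]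
      by_cases a : u < t
      · by_cases b : t < 1/4
        · have c : ¬ t ≤ 0 := by linarith
          simp only [a, b, c, if_true, if_false, and_self]
        · have c : ¬ t ≤ 0 := by linarith
          simp only [a, b, c, if_true, if_false, and_false]
      · rw [if_neg a, if_neg (by tauto)]
    have hsub : Set.Icc u (1/4) ⊆ Set.Ioc (0:ℝ) (1/4) := fun x hx => ⟨by linarith [hx.1], hx.2⟩
    have hsub' : Set.Ioo u (1/4) ⊆ Set.Ioo (0:ℝ) (1/4) := fun x hx => ⟨by linarith [hx.1], hx.2⟩
    have hc : ContinuousOn (fun x => -f x) (Set.Icc u (1/4)) := (h2.mono hsub).neg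
    have hd : ∀ x ∈ Set.Ioo u (1/4), HasDerivAt (fun x => -f x) (f' x) x := by
      intro x hx
      convert! (h5 x (hsub' hx)).neg using 1
      ring
    have hi := intervalIntegral.integrableOn_deriv_of_nonneg hc hd (fun x hx => h4.nonneg x (hsub' hx))
    have hIntg := intervalIntegral.integral_eq_sub_of_hasDerivAt_of_le hub.le hc hd
      ((intervalIntegrable_iff_integrableOn_Ioc_of_le hub.le).2 hi)
    rw [intervalIntegral.integral_of_le hub.le, integral_Ioc_eq_integral_Ioo] at hIntg
    rw [e1, ← ofReal_integral_eq_lintegral_ofReal (hi.mono_set Set.Ioo_subset_Ioc_self), hIntg]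
    · simp only [h3, extW]
      rw [if_neg (by linarith), if_pos hub]; simp
    · filter_upwards [ae_restrict_mem measurableSet_Ioo] with x hx using h4.nonneg x (hsub' hx)
  · rw [extW, if_neg (by linarith), if_neg hub]
    rw [setLIntegral_congr_fun (g := fun _ => 0) measurableSet_Ioi]
    · simp
    · intro t ht
      simp only [Set.mem_Ioi] at ht
      rw [extW, if_neg (by linarith), if_neg (by linarith)]

lemma Vp.exists_W {m : ℕ} : ∀ {f : ℝ → ℝ}, Vp m f → ∃ W, Vp 0 W ∧
    ∀ u, 0 < u → Jop^[m] (extW W) u = extW f u := by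
  induction m with
  | zero => intro f hf; exact ⟨f, hf, fun u _ => rfl⟩
  | succ m ih =>
    rintro f ⟨h1, h2, h3, f', h4, h5⟩
    obtain ⟨W, hW, h⟩ := ih h4
    refine ⟨W, hW, fun u hu => ?_⟩
    rw [Function.iterate_succ_apply', ← Jop_ext h2 h3 h4 h5 u hu]
    exact Jop_congr (fun t ht => h t (hu.trans ht))


lemma sq_change (g : ℝ → ℝ≥0∞) {r : ℝ} (hr : 0 ≤ r) :
    Jop g (r^2) = ∫⁻ t in Set.Ioi r, ENNReal.ofReal (2 * t) * g (t^2) := by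
  have him : (fun t : ℝ => t^2) '' Set.Ioi r = Set.Ioi (r^2) := by
    ext y
    simp only [Set.mem_image, Set.mem_Ioi]
    constructor
    · rintro ⟨t, ht, rfl⟩
      exact pow_lt_pow_left₀ ht hr two_ne_zero
    · intro hy
      exact ⟨Real.sqrt y, (Real.lt_sqrt hr).2 hy, Real.sq_sqrt ((sq_nonneg r).trans hy.le)⟩
  unfold Jop
  rw [← him, lintegral_image_eq_lintegral_abs_deriv_mul (f' := fun t => 2 * t) measurableSet_Ioi]
  · apply setLIntegral_congr_fun measurableSet_Ioi
    intro t ht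
    simp only [Set.mem_Ioi] at ht
    simp only [abs_of_nonneg (show (0:ℝ) ≤ 2 * t by linarith)]
  · intro x hx
    simpa using (hasDerivAt_pow 2 x).hasDerivWithinAt
  · intro x hx y hy hxy
    simp only [Set.mem_Ioi] at hx hy
    exact (pow_left_inj₀ (by linarith) (by linarith) two_ne_zero).1 hxy

lemma Jop_shift (g : ℝ → ℝ≥0∞) (a : ℝ) : Jop (fun t => g (a + t)) 0 = Jop g a := by
  unfold Jop
  rw [← lintegral_indicator measurableSet_Ioi, ← lintegral_indicator measurableSet_Ioi,
    ← lintegral_add_left_eq_self (fun t => (Set.Ioi a).indicator g t) a]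
  congr 1
  ext t
  simp [Set.indicator]

lemma polar_int {g : ℝ → ℝ≥0∞} (hg : Measurable g) (a : ℝ) :
    ∫⁻ z : ℂ, g (a + ‖z‖^2) = ENNReal.ofReal Real.pi * Jop g a := by
  rw [← Complex.lintegral_comp_polarCoord_symm]
  have e1 : ∀ p : ℝ × ℝ, ENNReal.ofReal p.1 • g (a + ‖Complex.polarCoord.symm p‖^2)
      = (ENNReal.ofReal p.1 * g (a + p.1^2)) * (fun _ => 1) p.2 := by
    intro p
    rw [Complex.norm_polarCoord_symm, sq_abs]; simp
  simp_rw [e1]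
  rw [polarCoord_target, Measure.volume_eq_prod, ← Measure.prod_restrict,
    lintegral_prod_mul (f := fun t => ENNReal.ofReal t * g (a + t^2)) (g := fun _ => 1) (by fun_prop) (by fun_prop)]
  rw [← Jop_shift, show (0:ℝ) = 0^2 by norm_num, sq_change _ le_rfl]
  have : ∀ t : ℝ, ENNReal.ofReal (2 * t) * g (a + t^2)
      = 2 * (ENNReal.ofReal t * g (a + t^2)) := by
    intro t
    rw [ENNReal.ofReal_mul (by norm_num), mul_assoc]; simp
  simp_rw [this]
  rw [lintegral_const_mul _ (by fun_prop)]
  simp only [lintegral_const, MeasurableSet.univ, Measure.restrict_apply, Set.univ_inter,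
    Real.volume_Ioo, one_mul, sub_neg_eq_add]
  rw [← two_mul, ENNReal.ofReal_mul (by norm_num)]
  simp only [ENNReal.ofReal_ofNat]
  norm_num
  ring

lemma Jop_iter_meas {g : ℝ → ℝ≥0∞} (hg : Measurable g) (j : ℕ) : Measurable (Jop^[j] g) := by
  cases j with
  | zero => exact hg
  | succ j => rw [Function.iterate_succ_apply']; exact (Jop_antitone _).measurable

lemma exists_iso (E F : Type) [NormedAddCommGroup E] [InnerProductSpace ℝ E]
    [FiniteDimensional ℝ E] [NormedAddCommGroup F] [InnerProductSpace ℝ F]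
    [FiniteDimensional ℝ F] (h : Module.finrank ℝ E = Module.finrank ℝ F) :
    Nonempty (E ≃ₗᵢ[ℝ] F) :=
  ⟨(stdOrthonormalBasis ℝ E).equiv (stdOrthonormalBasis ℝ F) (finCongr h)⟩

lemma radial_int (j : ℕ) : ∀ {g : ℝ → ℝ≥0∞}, Measurable g → ∀ a : ℝ,
    ∫⁻ v : EuclideanSpace ℝ (Fin (2*j)), g (a + ‖v‖^2)
      = ENNReal.ofReal Real.pi ^ j * Jop^[j] g a := by
  induction j with
  | zero =>
    intro g hg a
    have : IsEmpty (Fin (2*0)) := by simp; infer_instance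
    rw [volume_euclideanSpace_eq_dirac, lintegral_dirac]
    simp
  | succ j ih =>
    intro g hg a
    obtain ⟨e⟩ := exists_iso (EuclideanSpace ℝ (Fin (2*(j+1))))
      (WithLp 2 (ℂ × EuclideanSpace ℝ (Fin (2*j)))) (by
        rw [finrank_euclideanSpace_fin, (WithLp.linearEquiv 2 ℝ _).finrank_eq,
          Module.finrank_prod, finrank_euclideanSpace_fin, Complex.finrank_real_complex]; ring)
    calc ∫⁻ v : EuclideanSpace ℝ (Fin (2*(j+1))), g (a + ‖v‖^2)
        = ∫⁻ v : EuclideanSpace ℝ (Fin (2*(j+1))), g (a + ‖e v‖^2) := by simp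
      _ = ∫⁻ p : WithLp 2 (ℂ × EuclideanSpace ℝ (Fin (2*j))), g (a + ‖p‖^2) :=
        e.measurePreserving.lintegral_comp (f := fun p => g (a + ‖p‖^2)) (by fun_prop)
      _ = ∫⁻ p : ℂ × EuclideanSpace ℝ (Fin (2*j)), g (a + ‖WithLp.toLp 2 p‖^2) :=
        ((WithLp.volume_preserving_toLp ℂ (EuclideanSpace ℝ (Fin (2*j)))).lintegral_comp
          (f := fun p => g (a + ‖p‖^2)) (by fun_prop)).symm
      _ = ∫⁻ p : ℂ × EuclideanSpace ℝ (Fin (2*j)), g ((a + ‖p.1‖^2) + ‖p.2‖^2) := by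
        simp only [WithLp.prod_norm_sq_eq_of_L2, WithLp.toLp_fst, WithLp.toLp_snd, add_assoc]
      _ = ∫⁻ z : ℂ, ∫⁻ v : EuclideanSpace ℝ (Fin (2*j)), g ((a + ‖z‖^2) + ‖v‖^2) := by
        rw [Measure.volume_eq_prod, lintegral_prod _ (by fun_prop)]
      _ = ∫⁻ z : ℂ, ENNReal.ofReal Real.pi ^ j * Jop^[j] g (a + ‖z‖^2) := by
        simp_rw [ih hg]
      _ = _ := by
        have hm := Jop_iter_meas hg j
        rw [lintegral_const_mul _ (by fun_prop), polar_int hm, Function.iterate_succ_apply']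
        ring

/-- montee vs `Jop` -/
lemma montee_Jop (l : ℕ) (hl : 0 < l) (k : ℕ) :
    let φ := (montee^[k] (fun r => (max (1 - r) 0) ^ l))
    (∀ r, 1 ≤ r → φ r = 0) ∧ (∀ r, 0 ≤ r → 0 ≤ φ r) ∧ Continuous φ ∧
    ∀ r, 0 ≤ r → Jop^[k] (fun u => ENNReal.ofReal ((max (1 - Real.sqrt u) 0) ^ l)) (r^2)
      = 2 ^ k * ENNReal.ofReal (φ r) := by
  induction k with
  | zero =>
    refine ⟨?_, ?_, ?_, ?_⟩
    · intro r hr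
      simp only [Function.iterate_zero, id]
      rw [max_eq_right (by linarith), zero_pow hl.ne']
    · intro r hr
      simp only [Function.iterate_zero, id]; positivity
    · simp only [Function.iterate_zero, id]; fun_prop
    · intro r hr
      simp [Real.sqrt_sq hr]
  | succ k ih =>
    simp only [Function.iterate_succ_apply']
    set φ := (montee^[k] (fun r => (max (1 - r) 0) ^ l)) with hφ
    obtain ⟨h1, h2, h3, h4⟩ := ih
    have hc : Continuous fun t => t * φ t := by fun_prop
    have key : ∀ r, montee φ r = (∫ t in (0:ℝ)..1, t * φ t) - ∫ t in (0:ℝ)..r, t * φ t := by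
      intro r
      have hz : ∀ a, 1 ≤ a → IntegrableOn (fun t => t * φ t) (Set.Ioi a) ∧
          ∫ t in Set.Ioi a, t * φ t = 0 := by
        intro a ha
        have : Set.EqOn (fun t => t * φ t) (fun _ => 0) (Set.Ioi a) := by
          intro t ht
          simp only [Set.mem_Ioi] at ht
          simp [h1 t (by linarith)]
        refine ⟨(integrableOn_congr_fun this measurableSet_Ioi).2 (by simp), ?_⟩
        rw [setIntegral_congr_fun measurableSet_Ioi this]; simp
      set M := max r 1
      have hM : Set.Ioi r = Set.Ioc r M ∪ Set.Ioi M := (Set.Ioc_union_Ioi_eq_Ioi (le_max_left _ _)).symm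
      unfold montee
      rw [hM, setIntegral_union Set.Ioc_disjoint_Ioi_same measurableSet_Ioi
        (hc.integrableOn_Ioc) (hz M (le_max_right _ _)).1, (hz M (le_max_right _ _)).2, add_zero,
        ← intervalIntegral.integral_of_le (le_max_left _ _)]
      have h10 : ∫ t in (1:ℝ)..M, t * φ t = 0 := by
        rw [intervalIntegral.integral_congr (g := fun _ => 0)]
        · simp
        · intro t ht
          rw [Set.uIcc_of_le (le_max_right _ _)] at ht
          simp [h1 t ht.1]
      have ha := intervalIntegral.integral_add_adjacent_intervals
        (hc.intervalIntegrable 0 1 (μ := volume)) (hc.intervalIntegrable 1 M)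
      have hb := intervalIntegral.integral_add_adjacent_intervals
        (hc.intervalIntegrable 0 r (μ := volume)) (hc.intervalIntegrable r M)
      linarith
    have hIntg : ∀ r, IntegrableOn (fun t => t * φ t) (Set.Ioi r) := by
      intro r
      have : Function.support (fun t => t * φ t) ⊆ Set.Iic 1 := by
        intro t ht
        by_contra hh
        simp only [Set.mem_Iic, not_le] at hh
        exact ht (by simp [h1 t hh.le])
      have h : IntegrableOn (fun t => t * φ t) (Set.Icc r 1) := hc.integrableOn_Icc
      have hU : IntegrableOn (fun t => t * φ t) (Set.Icc r 1 ∪ Set.Ioi 1) := by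
        refine h.union ?_
        have : Set.EqOn (fun t => t * φ t) (fun _ => 0) (Set.Ioi 1) := by
          intro t ht
          simp only [Set.mem_Ioi] at ht
          simp [h1 t (by linarith)]
        exact (integrableOn_congr_fun this measurableSet_Ioi).2 (by simp)
      refine hU.mono_set ?_
      intro t ht
      by_cases h : t ≤ 1
      · exact Or.inl ⟨le_of_lt ht, h⟩
      · exact Or.inr (not_le.1 h)
    refine ⟨?_, ?_, ?_, ?_⟩
    · intro r hr
      unfold montee
      rw [setIntegral_congr_fun (g := fun _ => 0) measurableSet_Ioi]
      · simp
      · intro t ht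
        simp only [Set.mem_Ioi] at ht
        simp [h1 t (by linarith)]
    · intro r hr
      unfold montee
      apply setIntegral_nonneg measurableSet_Ioi
      intro t ht
      simp only [Set.mem_Ioi] at ht
      exact mul_nonneg (by linarith) (h2 t (by linarith))
    · rw [show montee φ = _ from funext key]
      exact continuous_const.sub (intervalIntegral.continuous_primitive
        (fun a b => hc.intervalIntegrable a b) 0)
    · intro r hr
      rw [sq_change _ hr]
      unfold montee
      rw [ofReal_integral_eq_lintegral_ofReal (hIntg r), ← lintegral_const_mul _ (by fun_prop)]
      · apply setLIntegral_congr_fun measurableSet_Ioi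
        intro t ht
        simp only [Set.mem_Ioi] at ht
        simp only
        rw [h4 t (by linarith), ENNReal.ofReal_mul (by norm_num),
          ENNReal.ofReal_mul (by linarith), ENNReal.ofReal_ofNat]
        ring
      · filter_upwards [ae_restrict_mem measurableSet_Ioi] with t ht
        simp only [Set.mem_Ioi] at ht
        exact mul_nonneg (by linarith) (h2 t (by linarith))


lemma line_int_real (m : ℕ) (A : ℝ) (hA : 0 < A) :
    ∫ t in (-A)..A, (2 * A - 2 * |t|) ^ m = (2 * A) ^ (m+1) / (m+1) := by
  have hc : Continuous fun t : ℝ => (2 * A - 2 * |t|) ^ m := by fun_prop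
  rw [← intervalIntegral.integral_add_adjacent_intervals (hc.intervalIntegrable (-A) 0)
    (hc.intervalIntegrable 0 A)]
  have e1 : ∫ t in (-A)..0, (2 * A - 2 * |t|) ^ m = ∫ t in (0:ℝ)..A, (2 * A - 2 * |t|) ^ m := by
    have := intervalIntegral.integral_comp_neg (a := 0) (b := A)
      (fun t : ℝ => (2 * A - 2 * |t|) ^ m)
    simp only [abs_neg, neg_zero] at this
    exact this.symm
  have e2 : ∫ t in (0:ℝ)..A, (2 * A - 2 * |t|) ^ m = ∫ t in (0:ℝ)..A, (2 * A - 2 * t) ^ m := by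
    apply intervalIntegral.integral_congr
    intro t ht
    rw [Set.uIcc_of_le hA.le] at ht
    simp only [abs_of_nonneg ht.1]
  have e3 : ∫ t in (0:ℝ)..A, (2 * A - 2 * t) ^ m = (2 * A) ^ (m+1) / (2 * (m+1)) := by
    have hd : ∀ t ∈ Set.uIcc 0 A, HasDerivAt (fun t => -((2 * A - 2 * t) ^ (m+1) / (2 * (m+1))))
        ((2 * A - 2 * t) ^ m) t := by
      intro t _
      have h := (((((hasDerivAt_id t).const_mul 2).const_sub (2*A)).pow (m+1)).div_const
        (2 * ((m:ℝ)+1))).neg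
      convert! h using 1
      have : (m:ℝ) + 1 ≠ 0 := by positivity
      push_cast
      simp only [id]
      field_simp
    rw [intervalIntegral.integral_eq_sub_of_hasDerivAt hd
      (Continuous.intervalIntegrable (by fun_prop) _ _)]
    simp
  rw [e1, e2, e3]
  have : (m:ℝ) + 1 ≠ 0 := by positivity
  field_simp
  norm_num

lemma line_int (m : ℕ) (r : ℝ) (hr : 0 ≤ r) :
    ∫⁻ t : ℝ, extW (fun u => (1 - 2 * Real.sqrt u) ^ m) ((|t| + r/2)^2)
      = ENNReal.ofReal ((max (1 - r) 0) ^ (m+1) / (m+1)) := by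
  have hval : ∀ t : ℝ, t ≠ 0 → extW (fun u => (1 - 2 * Real.sqrt u) ^ m) ((|t| + r/2)^2)
      = if |t| < (1 - r)/2 then ENNReal.ofReal ((2 * ((1-r)/2) - 2 * |t|)^m) else 0 := by
    intro t ht
    have h0 : 0 < |t| + r/2 := by have := abs_pos.2 ht; linarith
    have hiff : (|t| + r/2)^2 < 1/4 ↔ |t| < (1-r)/2 := by
      rw [show (1/4:ℝ) = (1/2)^2 by norm_num, sq_lt_sq₀ h0.le (by norm_num)]
      constructor <;> intro h <;> linarith
    unfold extW
    rw [if_neg (not_le.2 (by positivity))]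
    simp only [hiff, Real.sqrt_sq h0.le]
    split_ifs
    · congr 2; ring
    · rfl
  have hae : ∀ᵐ t : ℝ, t ≠ 0 := by simp [ae_iff]
  rw [lintegral_congr_ae (hae.mono hval)]
  by_cases hA : 0 < (1-r)/2
  · set A := (1-r)/2 with hAdef
    have hind : ∀ t : ℝ, (if |t| < A then ENNReal.ofReal ((2 * A - 2 * |t|)^m) else 0)
      = (Set.Ioo (-A) A).indicator (fun t => ENNReal.ofReal ((2 * A - 2 * |t|)^m)) t := by
      intro t
      simp only [Set.indicator, Set.mem_Ioo, abs_lt]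
    simp_rw [hind]
    rw [lintegral_indicator measurableSet_Ioo, ← ofReal_integral_eq_lintegral_ofReal,
      ← integral_Ioc_eq_integral_Ioo, ← intervalIntegral.integral_of_le (by linarith),
      line_int_real m A hA]
    · congr 3
      rw [max_eq_left (by linarith)]; linarith
    · exact (Continuous.integrableOn_Icc (by fun_prop)).mono_set Set.Ioo_subset_Icc_self
    · filter_upwards [ae_restrict_mem measurableSet_Ioo] with t ht
      have := abs_lt.2 ht
      exact pow_nonneg (by linarith) _
  · have : ∀ t : ℝ, ¬ |t| < (1-r)/2 := fun t h => hA ((abs_nonneg t).trans_lt h)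
    simp only [this, if_false, lintegral_zero]
    rw [max_eq_right (by linarith)]
    simp

lemma key_lens (m : ℕ) {W : ℝ → ℝ≥0∞} (hW : Antitone W)
    (hJ : ∀ u, 0 < u → Jop^[m] W u = extW (fun u => (1 - 2 * Real.sqrt u) ^ m) u)
    (E : Type) [NormedAddCommGroup E] [InnerProductSpace ℝ E] [FiniteDimensional ℝ E]
    [MeasurableSpace E] [BorelSpace E] (hE : Module.finrank ℝ E = 2 * m + 1) (a b : E) :
    ∫⁻ z : E, min (W (‖z - a‖^2)) (W (‖z - b‖^2)) =
      ENNReal.ofReal Real.pi ^ m * ENNReal.ofReal ((max (1 - ‖a - b‖) 0) ^ (m+1) / (m+1)) := by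
  have hWm : Measurable W := hW.measurable
  set V := EuclideanSpace ℝ (Fin (2*m))
  obtain ⟨e⟩ := exists_iso E (WithLp 2 (ℝ × V)) (by
    rw [hE, (WithLp.linearEquiv 2 ℝ _).finrank_eq, Module.finrank_prod,
      finrank_euclideanSpace_fin, Module.finrank_self]; ring)
  set r := ‖a - b‖ with hr
  set c : E := (2:ℝ)⁻¹ • (b - a) with hc
  set q : WithLp 2 (ℝ × V) := WithLp.toLp 2 (r/2, 0) with hq
  have hnc : ‖c‖ = r/2 := by
    rw [hc, norm_smul, norm_sub_rev b a, ← hr]; norm_num; ring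
  have hr0 : 0 ≤ r := norm_nonneg _
  have hnq : ‖q‖ = r/2 := by
    rw [← sq_eq_sq₀ (norm_nonneg _) (by positivity), WithLp.prod_norm_sq_eq_of_L2]
    simp [hq, abs_of_nonneg hr0]
  obtain ⟨e', he'⟩ : ∃ e' : E ≃ₗᵢ[ℝ] WithLp 2 (ℝ × V), e' c = q := by
    refine ⟨e.trans (Submodule.reflection (Submodule.span ℝ {e c - q})ᗮ), ?_⟩
    simp only [LinearIsometryEquiv.trans_apply]
    exact Submodule.reflection_sub (by rw [e.norm_map, hnc, hnq])
  set mid : E := (2:ℝ)⁻¹ • (a + b) with hmid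
  have hma : ∀ z : E, z + mid - a = z + c := by
    intro z
    rw [hmid, hc]
    have : a = (2:ℝ)⁻¹ • a + (2:ℝ)⁻¹ • a := by rw [← add_smul]; norm_num
    nth_rewrite 2 [this]
    rw [smul_add, smul_sub]; abel
  have hmb : ∀ z : E, z + mid - b = z - c := by
    intro z
    rw [hmid, hc]
    have : b = (2:ℝ)⁻¹ • b + (2:ℝ)⁻¹ • b := by rw [← add_smul]; norm_num
    nth_rewrite 2 [this]
    rw [smul_add, smul_sub]; abel
  have hmax : ∀ (t : ℝ) (v : V), max (‖WithLp.toLp 2 (t, v) + q‖^2) (‖WithLp.toLp 2 (t, v) - q‖^2)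
      = (|t| + r/2)^2 + ‖v‖^2 := by
    intro t v
    simp only [WithLp.prod_norm_sq_eq_of_L2, hq]
    simp only [WithLp.add_fst, WithLp.sub_fst, WithLp.add_snd, WithLp.sub_snd, WithLp.toLp_fst,
      WithLp.toLp_snd, add_zero, sub_zero, Real.norm_eq_abs, sq_abs]
    rw [max_add_add_right]
    congr 1
    rcases le_total 0 t with h | h
    · rw [abs_of_nonneg h, max_eq_left]
      nlinarith
    · rw [abs_of_nonpos h, max_eq_right]
      · ring
      · nlinarith
  calc ∫⁻ z : E, min (W (‖z - a‖^2)) (W (‖z - b‖^2))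
      = ∫⁻ z : E, W (max (‖z - a‖^2) (‖z - b‖^2)) := by
        simp_rw [hW.map_max]
    _ = ∫⁻ z : E, W (max (‖z + mid - a‖^2) (‖z + mid - b‖^2)) :=
        (lintegral_add_right_eq_self (fun z : E => W (max (‖z - a‖^2) (‖z - b‖^2))) mid).symm
    _ = ∫⁻ z : E, W (max (‖e' z + q‖^2) (‖e' z - q‖^2)) := by
        simp_rw [hma, hmb, ← he', ← map_add, ← map_sub, e'.norm_map]
    _ = ∫⁻ p : WithLp 2 (ℝ × V), W (max (‖p + q‖^2) (‖p - q‖^2)) :=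
        e'.measurePreserving.lintegral_comp
          (f := fun p => W (max (‖p + q‖^2) (‖p - q‖^2))) (by fun_prop)
    _ = ∫⁻ p : ℝ × V, W (max (‖WithLp.toLp 2 p + q‖^2) (‖WithLp.toLp 2 p - q‖^2)) :=
        ((WithLp.volume_preserving_toLp ℝ V).lintegral_comp
          (f := fun p => W (max (‖p + q‖^2) (‖p - q‖^2))) (by fun_prop)).symm
    _ = ∫⁻ p : ℝ × V, W ((|p.1| + r/2)^2 + ‖p.2‖^2) := by
        congr 1; ext p; rw [← hmax]
    _ = ∫⁻ t : ℝ, ∫⁻ v : V, W ((|t| + r/2)^2 + ‖v‖^2) := by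
        rw [Measure.volume_eq_prod, lintegral_prod _ (by fun_prop)]
    _ = ∫⁻ t : ℝ, ENNReal.ofReal Real.pi ^ m * Jop^[m] W ((|t| + r/2)^2) := by
        simp_rw [V, radial_int m hWm]
    _ = ∫⁻ t : ℝ, ENNReal.ofReal Real.pi ^ m *
          extW (fun u => (1 - 2 * Real.sqrt u) ^ m) ((|t| + r/2)^2) := by
        have hae : ∀ᵐ t : ℝ, t ≠ 0 := by simp [ae_iff]
        apply lintegral_congr_ae
        filter_upwards [hae] with t ht
        rw [hJ]
        have := abs_pos.2 ht
        positivity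
    _ = _ := by
        have : Measurable (extW (fun u => (1 - 2 * Real.sqrt u) ^ m)) :=
          (Vp_base m).ext_antitone.measurable
        rw [lintegral_const_mul _ (by fun_prop), line_int m r hr0]


lemma gram_ae {Ω : Type} [MeasurableSpace Ω] (μ : Measure Ω) {N : ℕ} (g : Fin N → Ω → ℝ≥0∞)
    (hg : ∀ i, Measurable (g i)) (K : Fin N → Fin N → ℝ) (hK : ∀ i j, 0 ≤ K i j)
    (h : ∀ i j, ∫⁻ ω, g i ω * g j ω ∂μ = ENNReal.ofReal (K i j)) (c : Fin N → ℝ)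
    (hneg : ∑ i, ∑ j, c i * c j * K i j ≤ 0) :
    ∀ᵐ ω ∂μ, ∑ i, c i * (g i ω).toReal = 0 := by
  have hIntg : ∀ i j, Integrable (fun ω => (g i ω).toReal * (g j ω).toReal) μ := by
    intro i j
    simp_rw [← ENNReal.toReal_mul]
    exact integrable_toReal_of_lintegral_ne_top ((hg i).mul (hg j)).aemeasurable
      (by rw [h]; exact ENNReal.ofReal_ne_top)
  have hval : ∀ i j, ∫ ω, (g i ω).toReal * (g j ω).toReal ∂μ = K i j := by
    intro i j
    simp_rw [← ENNReal.toReal_mul]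
    rw [integral_toReal (f := fun ω => g i ω * g j ω) ((hg i).mul (hg j)).aemeasurable
      (ae_lt_top (f := fun ω => g i ω * g j ω) ((hg i).mul (hg j))
        (by rw [h]; exact ENNReal.ofReal_ne_top)), h, ENNReal.toReal_ofReal (hK i j)]
  have hsq : ∀ ω, (∑ i, c i * (g i ω).toReal)^2
      = ∑ i, ∑ j, c i * c j * ((g i ω).toReal * (g j ω).toReal) := by
    intro ω
    rw [sq, Finset.sum_mul_sum]
    refine Finset.sum_congr rfl fun i _ => Finset.sum_congr rfl fun j _ => by ring
  have hi2 : Integrable (fun ω => (∑ i, c i * (g i ω).toReal)^2) μ := by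
    simp_rw [hsq]
    exact integrable_finsetSum _ fun i _ => integrable_finsetSum _ fun j _ =>
      (hIntg i j).const_mul _
  have hI : ∫ ω, (∑ i, c i * (g i ω).toReal)^2 ∂μ = ∑ i, ∑ j, c i * c j * K i j := by
    simp_rw [hsq]
    rw [integral_finsetSum _ fun i _ => integrable_finsetSum _ fun j _ =>
      (hIntg i j).const_mul _]
    refine Finset.sum_congr rfl fun i _ => ?_
    rw [integral_finsetSum _ fun j _ => (hIntg i j).const_mul _]
    refine Finset.sum_congr rfl fun j _ => ?_
    rw [integral_const_mul, hval]
  have h0 : ∫ ω, (∑ i, c i * (g i ω).toReal)^2 ∂μ = 0 :=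
    le_antisymm (hI ▸ hneg) (integral_nonneg fun ω => sq_nonneg _)
  rw [integral_eq_zero_iff_of_nonneg (fun ω => sq_nonneg _) hi2] at h0
  filter_upwards [h0] with ω hω
  exact pow_eq_zero_iff two_ne_zero |>.1 hω

/-- level-set indicator -/
noncomputable def Hf (W : ℝ → ℝ≥0∞) (t q : ℝ) : ℝ≥0∞ :=
  if ENNReal.ofReal t < W q then 1 else 0

lemma Hf_meas {W : ℝ → ℝ≥0∞} (hW : Measurable W) {α : Type} [MeasurableSpace α] {f g : α → ℝ}
    (hf : Measurable f) (hg : Measurable g) : Measurable (fun z => Hf W (f z) (g z)) := by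
  unfold Hf
  exact Measurable.ite (measurableSet_lt (by fun_prop) (by fun_prop)) measurable_const
    measurable_const

lemma layer (M : ℝ≥0∞) :
    ∫⁻ t in Set.Ioi (0:ℝ), (if ENNReal.ofReal t < M then 1 else 0) = M := by
  by_cases hM : M = ⊤
  · subst hM
    simp
  · have : ∀ t ∈ Set.Ioi (0:ℝ), (if ENNReal.ofReal t < M then (1:ℝ≥0∞) else 0)
        = (Set.Iio M.toReal).indicator (fun _ => 1) t := by
      intro t ht
      simp only [Set.indicator, Set.mem_Iio]
      simp only [ENNReal.ofReal_lt_iff_lt_toReal (le_of_lt ht) hM]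
    rw [setLIntegral_congr_fun measurableSet_Ioi this, lintegral_indicator measurableSet_Iio,
      setLIntegral_const, one_mul, Measure.restrict_apply measurableSet_Iio, Set.inter_comm,
      Set.Ioi_inter_Iio, Real.volume_Ioo, sub_zero, ENNReal.ofReal_toReal hM]

lemma Hf_layer (W : ℝ → ℝ≥0∞) (a b : ℝ) :
    ∫⁻ t in Set.Ioi (0:ℝ), Hf W t a * Hf W t b = min (W a) (W b) := by
  rw [← layer (min (W a) (W b))]
  congr 1
  ext t
  unfold Hf
  by_cases h1 : ENNReal.ofReal t < W a <;> by_cases h2 : ENNReal.ofReal t < W b <;>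
    simp [h1, h2]

/-- marginal of the level-set indicator -/
noncomputable def Gf (W : ℝ → ℝ≥0∞) (k : ℕ) {F : Type} [NormedAddCommGroup F] (t : ℝ) (u : F) :
    ℝ≥0∞ := ∫⁻ w : EuclideanSpace ℝ (Fin (2*k)), Hf W t (‖u‖^2 + ‖w‖^2)

lemma Gf_meas {W : ℝ → ℝ≥0∞} (hW : Measurable W) (k : ℕ) {F : Type} [NormedAddCommGroup F]
    [MeasurableSpace F] [BorelSpace F] {α : Type} [MeasurableSpace α] {f : α → ℝ} {g : α → F}
    (hf : Measurable f) (hg : Measurable g) :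
    Measurable (fun z => Gf W k (f z) (g z)) := by
  unfold Gf
  apply Measurable.lintegral_prod_right' (f := fun q : α × EuclideanSpace ℝ (Fin (2*k)) =>
    Hf W (f q.1) (‖g q.1‖^2 + ‖q.2‖^2))
  exact Hf_meas hW (by fun_prop) (by fun_prop)

lemma main_id (p k : ℕ) {W : ℝ → ℝ≥0∞} (hW : Antitone W)
    (hJ : ∀ u, 0 < u → Jop^[p+k] W u = extW (fun u => (1 - 2 * Real.sqrt u) ^ (p+k)) u)
    (F : Type) [NormedAddCommGroup F] [InnerProductSpace ℝ F] [FiniteDimensional ℝ F]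
    [MeasurableSpace F] [BorelSpace F] (hF : Module.finrank ℝ F = 2 * p + 1) (x y : F) :
    ∫⁻ ω : ℝ × F, Gf W k ω.1 (ω.2 - x) * Gf W k ω.1 (ω.2 - y)
        ∂((volume.restrict (Set.Ioi 0)).prod volume)
      = ENNReal.ofReal ((Real.pi ^ (p+k) / ((p+k:ℕ)+1) * (Real.pi^k * 2^k)) *
        (montee^[k] (fun r => (max (1 - r) 0) ^ (p + k + 1))) ‖x - y‖) := by
  have hWm : Measurable W := hW.measurable
  set V := EuclideanSpace ℝ (Fin (2*k)) with hV
  have hlens : ∀ v : V, ∫⁻ q : F × V, min (W (‖q.1 - x‖^2 + ‖q.2‖^2))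
      (W (‖q.1 - y‖^2 + ‖q.2 - v‖^2)) = ENNReal.ofReal Real.pi ^ (p+k) *
        ENNReal.ofReal ((max (1 - Real.sqrt (‖x-y‖^2+‖v‖^2)) 0) ^ (p+k+1) / ((p+k:ℕ)+1)) := by
    intro v
    have h := key_lens (p+k) hW hJ (WithLp 2 (F × V)) (by
      rw [(WithLp.linearEquiv 2 ℝ _).finrank_eq, Module.finrank_prod, hF,
        finrank_euclideanSpace_fin]; ring)
        (WithLp.toLp 2 (x, 0)) (WithLp.toLp 2 (y, v))
    have hn : ‖(WithLp.toLp 2 (x, 0) : WithLp 2 (F × V)) - WithLp.toLp 2 (y, v)‖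
        = Real.sqrt (‖x-y‖^2+‖v‖^2) := by
      rw [← Real.sqrt_sq (norm_nonneg _), WithLp.prod_norm_sq_eq_of_L2]
      simp
    rw [hn] at h
    rw [← h, ← (WithLp.volume_preserving_toLp F V).lintegral_comp (by fun_prop)]
    simp only [WithLp.prod_norm_sq_eq_of_L2, WithLp.sub_fst, WithLp.sub_snd, WithLp.toLp_fst,
      WithLp.toLp_snd, sub_zero]
  have hG : ∀ (t : ℝ) (u : F) (w : V),
      ∫⁻ v : V, Hf W t (‖u‖^2 + ‖w - v‖^2) = Gf W k t u := by
    intro t u w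
    exact lintegral_sub_left_eq_self (fun v : V => Hf W t (‖u‖^2 + ‖v‖^2)) w
  have hchain : ∫⁻ ω : ℝ × F, Gf W k ω.1 (ω.2 - x) * Gf W k ω.1 (ω.2 - y)
        ∂((volume.restrict (Set.Ioi 0)).prod volume)
      = ∫⁻ v : V, ∫⁻ q : F × V, min (W (‖q.1 - x‖^2 + ‖q.2‖^2))
      (W (‖q.1 - y‖^2 + ‖q.2 - v‖^2)) := by
    symm
    calc ∫⁻ v : V, ∫⁻ q : F × V, min (W (‖q.1 - x‖^2 + ‖q.2‖^2)) (W (‖q.1 - y‖^2 + ‖q.2 - v‖^2))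
        = ∫⁻ v : V, ∫⁻ q : F × V, ∫⁻ t in Set.Ioi (0:ℝ), Hf W t (‖q.1 - x‖^2 + ‖q.2‖^2)
            * Hf W t (‖q.1 - y‖^2 + ‖q.2 - v‖^2) := by simp_rw [Hf_layer]
      _ = ∫⁻ v : V, ∫⁻ t in Set.Ioi (0:ℝ), ∫⁻ q : F × V, Hf W t (‖q.1 - x‖^2 + ‖q.2‖^2)
            * Hf W t (‖q.1 - y‖^2 + ‖q.2 - v‖^2) := by
          refine lintegral_congr fun v => ?_
          apply lintegral_lintegral_swap
          apply Measurable.aemeasurable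
          exact (Hf_meas hWm (by fun_prop) (by fun_prop)).mul
            (Hf_meas hWm (by fun_prop) (by fun_prop))
      _ = ∫⁻ t in Set.Ioi (0:ℝ), ∫⁻ v : V, ∫⁻ q : F × V, Hf W t (‖q.1 - x‖^2 + ‖q.2‖^2)
            * Hf W t (‖q.1 - y‖^2 + ‖q.2 - v‖^2) := by
          apply lintegral_lintegral_swap
          apply Measurable.aemeasurable
          apply Measurable.lintegral_prod_right' (f := fun z : (V × ℝ) × (F × V) =>
            Hf W z.1.2 (‖z.2.1 - x‖^2 + ‖z.2.2‖^2)
            * Hf W z.1.2 (‖z.2.1 - y‖^2 + ‖z.2.2 - z.1.1‖^2))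
          exact (Hf_meas hWm (by fun_prop) (by fun_prop)).mul
            (Hf_meas hWm (by fun_prop) (by fun_prop))
      _ = ∫⁻ t in Set.Ioi (0:ℝ), ∫⁻ q : F × V, ∫⁻ v : V, Hf W t (‖q.1 - x‖^2 + ‖q.2‖^2)
            * Hf W t (‖q.1 - y‖^2 + ‖q.2 - v‖^2) := by
          refine lintegral_congr fun t => ?_
          apply lintegral_lintegral_swap
          apply Measurable.aemeasurable
          exact (Hf_meas hWm (by fun_prop) (by fun_prop)).mul
            (Hf_meas hWm (by fun_prop) (by fun_prop))
      _ = ∫⁻ t in Set.Ioi (0:ℝ), ∫⁻ q : F × V, Hf W t (‖q.1 - x‖^2 + ‖q.2‖^2)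
            * Gf W k t (q.1 - y) := by
          refine lintegral_congr fun t => lintegral_congr fun q => ?_
          rw [lintegral_const_mul _ (Hf_meas hWm (by fun_prop) (by fun_prop)), hG]
      _ = ∫⁻ t in Set.Ioi (0:ℝ), ∫⁻ u : F, Gf W k t (u - x) * Gf W k t (u - y) := by
          refine lintegral_congr fun t => ?_
          rw [Measure.volume_eq_prod, lintegral_prod]
          · refine lintegral_congr fun u => ?_
            show ∫⁻ w : V, Hf W t (‖u - x‖^2 + ‖w‖^2) * Gf W k t (u - y) = _
            rw [lintegral_mul_const _ (Hf_meas hWm (by fun_prop) (by fun_prop))]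
            rfl
          · exact ((Hf_meas hWm (by fun_prop) (by fun_prop)).mul
              (Gf_meas hWm k (by fun_prop) (by fun_prop))).aemeasurable
      _ = _ := by
          rw [lintegral_prod]
          exact ((Gf_meas hWm k (by fun_prop) (by fun_prop)).mul
              (Gf_meas hWm k (by fun_prop) (by fun_prop))).aemeasurable
  rw [hchain]
  simp_rw [hlens]
  obtain ⟨-, hnn, -, hM⟩ := montee_Jop (p+k+1) (by omega) k
  have hpull : ∀ v : V, ENNReal.ofReal Real.pi ^ (p+k) *
        ENNReal.ofReal ((max (1 - Real.sqrt (‖x-y‖^2+‖v‖^2)) 0) ^ (p+k+1) / ((p+k:ℕ)+1))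
      = ENNReal.ofReal (Real.pi ^ (p+k) / ((p+k:ℕ)+1)) *
        ENNReal.ofReal ((max (1 - Real.sqrt (‖x-y‖^2+‖v‖^2)) 0) ^ (p+k+1)) := by
    intro v
    rw [← ENNReal.ofReal_pow Real.pi_pos.le, ← ENNReal.ofReal_mul (by positivity),
      ← ENNReal.ofReal_mul (by positivity)]
    congr 1; ring
  simp_rw [hpull]
  rw [lintegral_const_mul _ (by fun_prop),
    radial_int k (g := fun u => ENNReal.ofReal ((max (1 - Real.sqrt u) 0) ^ (p+k+1)))
      (by fun_prop), hM _ (norm_nonneg _), ENNReal.ofReal_mul (by positivity),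
      ENNReal.ofReal_mul (by positivity), ENNReal.ofReal_mul (by positivity),
      ENNReal.ofReal_pow Real.pi_pos.le, ENNReal.ofReal_pow (by norm_num : (0:ℝ) ≤ 2),
      ENNReal.ofReal_ofNat, mul_assoc, mul_assoc]


lemma Jop_iter_zero {W : ℝ → ℝ≥0∞} (h : ∀ u, 0 < u → W u = 0) (m : ℕ) :
    ∀ u, 0 < u → Jop^[m] W u = 0 := by
  induction m with
  | zero => exact h
  | succ m ih =>
    intro u hu
    rw [Function.iterate_succ_apply', Jop_congr (g := fun _ => 0) (fun t ht => ih t (hu.trans ht))]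
    simp [Jop]

lemma exists_pos_W {W : ℝ → ℝ≥0∞} (m : ℕ)
    (hJ : ∀ u, 0 < u → Jop^[m] W u = extW (fun u => (1 - 2 * Real.sqrt u) ^ m) u) :
    ∃ u, 0 < u ∧ 0 < W u := by
  by_contra hcon
  have hz : ∀ u, 0 < u → W u = 0 := by
    intro u hu
    by_contra h
    exact hcon ⟨u, hu, pos_iff_ne_zero.2 h⟩
  have h1 := hJ (1/16) (by norm_num)
  rw [Jop_iter_zero hz m _ (by norm_num)] at h1
  have h2 : Real.sqrt (1/16) = 1/4 := by
    rw [show (1/16:ℝ) = (1/4)^2 by norm_num]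
    exact Real.sqrt_sq (by norm_num)
  unfold extW at h1
  rw [if_neg (by norm_num), if_pos (by norm_num)] at h1
  have h3 := ENNReal.ofReal_eq_zero.1 h1.symm
  simp only [h2] at h3
  have : (0:ℝ) < (1 - 2 * (1/4)) ^ m := by positivity
  linarith

lemma extremal {F : Type} [NormedAddCommGroup F] [InnerProductSpace ℝ F] {N : ℕ}
    (x : Fin N → F) (hx : Function.Injective x) (c : Fin N → ℝ) (hc : c ≠ 0) {R : ℝ}
    (hR : 0 < R) :
    ∃ i, c i ≠ 0 ∧ ∃ u, ‖u - x i‖ < R ∧ ∀ j, j ≠ i → c j ≠ 0 → R < ‖u - x j‖ := by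
  classical
  obtain ⟨i0, hi0⟩ : ∃ i, c i ≠ 0 := Function.ne_iff.1 hc
  obtain ⟨i, hi, hmax⟩ := Finset.exists_max_image (Finset.univ.filter fun i => c i ≠ 0)
    (fun i => ‖x i‖) ⟨i0, by simp [hi0]⟩
  simp only [Finset.mem_filter, Finset.mem_univ, true_and] at hi hmax
  refine ⟨i, hi, ?_⟩
  by_cases h0 : x i = 0
  · refine ⟨x i, by simpa using hR, fun j hj hcj => ?_⟩
    have h1 := hmax j hcj
    rw [h0, norm_zero] at h1
    exact absurd (hx ((norm_le_zero_iff.1 h1).trans h0.symm)) hj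
  have hn : 0 < ‖x i‖ := norm_pos_iff.2 h0
  set d := R / ‖x i‖ with hd
  have hdpos : 0 < d := by positivity
  have hdR : d * ‖x i‖ = R := by rw [hd]; field_simp
  have hopen : IsOpen {u : F | ∀ j, j ≠ i → c j ≠ 0 → R < ‖u - x j‖} := by
    simp only [Set.ofPred_forall]
    exact isOpen_iInter_of_finite fun j => isOpen_iInter_of_finite fun _ =>
      isOpen_iInter_of_finite fun _ => isOpen_lt continuous_const (by fun_prop)
  have hmem : x i + d • x i ∈ {u : F | ∀ j, j ≠ i → c j ≠ 0 → R < ‖u - x j‖} := by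
    intro j hj hcj
    have e : x i + d • x i - x j = (x i - x j) + d • x i := by abel
    have h1 : ‖x i + d • x i - x j‖^2 = ‖x i - x j‖^2 + 2 * (d * inner ℝ (x i - x j) (x i)) + R^2 := by
      rw [e, norm_add_sq_real, inner_smul_right, norm_smul, Real.norm_of_nonneg hdpos.le, hdR]
    have h2 : 0 ≤ inner ℝ (x i - x j) (x i) := by
      rw [inner_sub_left, real_inner_self_eq_norm_sq]
      have := real_inner_le_norm (x j) (x i)
      have := hmax j hcj
      nlinarith
    have h3 : 0 < ‖x i - x j‖ := norm_pos_iff.2 (sub_ne_zero.2 fun h => hj (hx h.symm))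
    have h4 : 0 ≤ d * inner ℝ (x i - x j) (x i) := mul_nonneg hdpos.le h2
    apply lt_of_pow_lt_pow_left₀ 2 (norm_nonneg _)
    nlinarith [pow_pos h3 2]
  have hcl : x i + d • x i ∈ closure (Metric.ball (x i) R) := by
    rw [closure_ball _ hR.ne', mem_closedBall_iff_norm, add_sub_cancel_left, norm_smul,
      Real.norm_of_nonneg hdpos.le, hdR]
  obtain ⟨u, hu1, hu2⟩ := mem_closure_iff.1 hcl _ hopen hmem
  exact ⟨u, by simpa [dist_eq_norm] using hu2, hu1⟩

lemma level {W : ℝ → ℝ≥0∞} (hW : Antitone W) (hW4 : ∀ q, 1/4 ≤ q → W q = 0) {t u0 : ℝ}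
    (hu0 : 0 < u0) (ht : ENNReal.ofReal t < W u0) :
    ∃ R, 0 < R ∧ (∀ q, q < R^2 → ENNReal.ofReal t < W q) ∧
      (∀ q, R^2 < q → ¬ ENNReal.ofReal t < W q) := by
  have hb : BddAbove {q | ENNReal.ofReal t < W q} := by
    refine ⟨1/4, fun q hq => ?_⟩
    by_contra h
    rw [Set.mem_ofPred_eq, hW4 q (le_of_not_ge h)] at hq
    exact not_lt_bot hq
  have hle : u0 ≤ sSup {q | ENNReal.ofReal t < W q} := le_csSup hb ht
  have hpos := hu0.trans_le hle
  refine ⟨Real.sqrt (sSup {q | ENNReal.ofReal t < W q}), Real.sqrt_pos.2 hpos, ?_, ?_⟩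
  · intro q hq
    rw [Real.sq_sqrt hpos.le] at hq
    obtain ⟨q', hq', h⟩ := exists_lt_of_lt_csSup ⟨u0, ht⟩ hq
    exact lt_of_lt_of_le hq' (hW h.le)
  · intro q hq h
    rw [Real.sq_sqrt hpos.le] at hq
    exact absurd (le_csSup hb h) (not_le.2 hq)

lemma Gf_pos {W : ℝ → ℝ≥0∞} (hW : Antitone W) (k : ℕ) {F : Type} [NormedAddCommGroup F] {t R : ℝ}
    (h : ∀ q, q < R^2 → ENNReal.ofReal t < W q) {u : F} (hu : ‖u‖ < R) :
    0 < Gf W k t u := by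
  unfold Gf
  rw [lintegral_pos_iff_support (Hf_meas hW.measurable (by fun_prop) (by fun_prop))]
  have ho : IsOpen {w : EuclideanSpace ℝ (Fin (2*k)) | ‖u‖^2 + ‖w‖^2 < R^2} :=
    isOpen_lt (by fun_prop) continuous_const
  refine lt_of_lt_of_le (ho.measure_pos volume ⟨0, ?_⟩) (measure_mono ?_)
  · simp only [Set.mem_ofPred_eq, norm_zero]
    nlinarith [norm_nonneg u]
  · intro w hw
    rw [Function.mem_support, Hf, if_pos (h _ hw)]
    exact one_ne_zero

lemma Gf_zero {W : ℝ → ℝ≥0∞} (k : ℕ) {F : Type} [NormedAddCommGroup F] {t R : ℝ} (hR : 0 < R)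
    (h : ∀ q, R^2 < q → ¬ ENNReal.ofReal t < W q) {u : F} (hu : R < ‖u‖) :
    Gf W k t u = 0 := by
  unfold Gf
  have : ∀ w : EuclideanSpace ℝ (Fin (2*k)), Hf W t (‖u‖^2 + ‖w‖^2) = 0 := by
    intro w
    rw [Hf, if_neg (h _ (by nlinarith [sq_nonneg ‖w‖]))]
  simp [this]

lemma Gf_ne_top {W : ℝ → ℝ≥0∞} (hW4 : ∀ q, 1/4 ≤ q → W q = 0) (k : ℕ) {F : Type}
    [NormedAddCommGroup F] (t : ℝ) (u : F) : Gf W k t u ≠ ⊤ := by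
  unfold Gf
  have hle : ∫⁻ w : EuclideanSpace ℝ (Fin (2*k)), Hf W t (‖u‖^2 + ‖w‖^2)
      ≤ ∫⁻ w : EuclideanSpace ℝ (Fin (2*k)), (Metric.ball 0 1).indicator (fun _ => 1) w := by
    refine lintegral_mono fun w => ?_
    by_cases hw : w ∈ Metric.ball (0 : EuclideanSpace ℝ (Fin (2*k))) 1
    · rw [Set.indicator_of_mem hw, Hf]
      split_ifs <;> simp
    · have : 1 ≤ ‖w‖ := by simpa using hw
      rw [Hf, hW4 _ (by nlinarith [sq_nonneg ‖u‖])]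
      simp
  refine ne_top_of_le_ne_top ?_ hle
  rw [lintegral_indicator measurableSet_ball, setLIntegral_const, one_mul]
  exact measure_ball_lt_top.ne

lemma main_odd (p k : ℕ) (F : Type) [NormedAddCommGroup F] [InnerProductSpace ℝ F]
    [FiniteDimensional ℝ F] [MeasurableSpace F] [BorelSpace F]
    (hF : Module.finrank ℝ F = 2 * p + 1) (N : ℕ) (x : Fin N → F) (hx : Function.Injective x)
    (c : Fin N → ℝ) (hc : c ≠ 0) :
    0 < ∑ i : Fin N, ∑ j : Fin N, c i * c j *
      (montee^[k] (fun r => (max (1 - r) 0) ^ (p + k + 1))) ‖x i - x j‖ := by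
  obtain ⟨W0, hV, hJ⟩ := (Vp_base (p+k)).exists_W
  have hW : Antitone (extW W0) := hV.ext_antitone
  have hW4 : ∀ q, 1/4 ≤ q → extW W0 q = 0 := by
    intro q hq
    unfold extW
    rw [if_neg (by linarith), if_neg (by linarith)]
  obtain ⟨u0, hu0, hWu0⟩ := exists_pos_W (p+k) hJ
  obtain ⟨-, hnn, -, -⟩ := montee_Jop (p+k+1) (by omega) k
  set W := extW W0 with hWdef
  set φ := (montee^[k] (fun r => (max (1 - r) 0) ^ (p + k + 1))) with hφ
  by_contra hcon
  set C : ℝ := Real.pi ^ (p+k) / ((p+k:ℕ)+1) * (Real.pi^k * 2^k) with hC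
  have hCpos : 0 ≤ C := by positivity
  have hneg : ∑ i, ∑ j, c i * c j * (C * φ ‖x i - x j‖) ≤ 0 := by
    have : ∑ i, ∑ j, c i * c j * (C * φ ‖x i - x j‖)
        = C * ∑ i, ∑ j, c i * c j * φ ‖x i - x j‖ := by
      simp_rw [Finset.mul_sum]
      refine Finset.sum_congr rfl fun i _ => Finset.sum_congr rfl fun j _ => by ring
    rw [this]
    exact mul_nonpos_of_nonneg_of_nonpos hCpos (not_lt.1 hcon)
  have hae := gram_ae (((volume : Measure ℝ).restrict (Set.Ioi 0)).prod (volume : Measure F))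
    (fun i ω => Gf W k ω.1 (ω.2 - x i))
    (fun i => Gf_meas hW.measurable k (by fun_prop) (by fun_prop))
    (fun i j => C * φ ‖x i - x j‖) (fun i j => mul_nonneg hCpos (hnn _ (norm_nonneg _)))
    (fun i j => main_id p k hW hJ F hF (x i) (x j)) c hneg
  have hae2 := Measure.ae_ae_of_ae_prod hae
  rw [ae_restrict_iff' measurableSet_Ioi] at hae2
  -- choose a level
  set t0 := (min 1 (W u0)).toReal with ht0
  have hmt : min 1 (W u0) ≠ ⊤ := ne_top_of_le_ne_top ENNReal.one_ne_top (min_le_left _ _)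
  have ht0pos : 0 < t0 :=
    ENNReal.toReal_pos (lt_min one_pos hWu0).ne' hmt
  obtain ⟨t, htI, ht⟩ : ∃ t ∈ Set.Ioo 0 t0, t ∈ Set.Ioi (0:ℝ) →
      ∀ᵐ u : F, ∑ i, c i * (Gf W k t (u - x i)).toReal = 0 := by
    by_contra hno
    have hvol : volume (Set.Ioo 0 t0) = 0 := by
      refine measure_mono_null ?_ (ae_iff.1 hae2)
      intro t ht h
      exact hno ⟨t, ht, h⟩
    rw [Real.volume_Ioo, ENNReal.ofReal_eq_zero] at hvol
    linarith
  have ht := ht htI.1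
  have htW : ENNReal.ofReal t < W u0 := by
    refine lt_of_lt_of_le ?_ (min_le_right 1 (W u0))
    exact (ENNReal.ofReal_lt_iff_lt_toReal htI.1.le hmt).2 htI.2
  obtain ⟨R, hR, hRin, hRout⟩ := level hW hW4 hu0 htW
  obtain ⟨i, hci, u, hu1, hu2⟩ := extremal x hx c hc hR
  have hopen : IsOpen {u : F | ‖u - x i‖ < R ∧ ∀ j, j ≠ i → c j ≠ 0 → R < ‖u - x j‖} := by
    have h1 : IsOpen {u : F | ‖u - x i‖ < R} := isOpen_lt (by fun_prop) continuous_const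
    have h2 : IsOpen {u : F | ∀ j, j ≠ i → c j ≠ 0 → R < ‖u - x j‖} := by
      simp only [Set.ofPred_forall]
      exact isOpen_iInter_of_finite fun j => isOpen_iInter_of_finite fun _ =>
      isOpen_iInter_of_finite fun _ => isOpen_lt continuous_const (by fun_prop)
    exact h1.inter h2
  refine (hopen.measure_pos volume ⟨u, hu1, hu2⟩).ne' (measure_mono_null ?_ (ae_iff.1 ht))
  rintro v ⟨hv1, hv2⟩ hsum
  rw [Finset.sum_eq_single i] at hsum
  · have h1 := Gf_pos hW k hRin hv1
    have h2 := ENNReal.toReal_pos h1.ne' (Gf_ne_top hW4 k t (v - x i))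
    exact (mul_ne_zero hci h2.ne') hsum
  · intro j _ hj
    by_cases hcj : c j = 0
    · rw [hcj, zero_mul]
    · rw [Gf_zero k hR hRout (hv2 j hj hcj)]
      simp
  · intro h
    exact absurd (Finset.mem_univ i) h

/-- For every integer `s ≥ 1` and every integer `k ≥ 0`, the Wendland function
`φ_{s,k}` is strictly positive definite and radial on `ℝ^s`: for every finite family
of pairwise distinct points `x₁, …, x_N` in `s`-dimensional Euclidean space and every
nonzero vector of coefficients `c₁, …, c_N`,
`∑ i ∑ j, c i * c j * φ_{s,k}(‖x i - x j‖) > 0`. -/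
theorem wendland_strictly_positive_definite
    (s : ℕ) (hs : 1 ≤ s) (k : ℕ)
    (N : ℕ) (x : Fin N → EuclideanSpace ℝ (Fin s)) (hx : Function.Injective x)
    (c : Fin N → ℝ) (hc : c ≠ 0) :
    0 < ∑ i : Fin N, ∑ j : Fin N, c i * c j * wendland s k ‖x i - x j‖ := by
  unfold wendland
  rcases Nat.even_or_odd' s with ⟨p, rfl | rfl⟩
  · rw [show 2 * p / 2 = p by omega]
    have h := main_odd p k (WithLp 2 (EuclideanSpace ℝ (Fin (2*p)) × ℝ)) (by
      rw [(WithLp.linearEquiv 2 ℝ _).finrank_eq, Module.finrank_prod,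
        finrank_euclideanSpace_fin, Module.finrank_self]) N
      (fun i => WithLp.toLp 2 (x i, 0)) (fun i j hij => hx (by simpa using hij)) c hc
    have hn : ∀ i j, ‖(WithLp.toLp 2 (x i, (0:ℝ)) : WithLp 2 (EuclideanSpace ℝ (Fin (2*p)) × ℝ))
        - WithLp.toLp 2 (x j, 0)‖ = ‖x i - x j‖ := by
      intro i j
      rw [← sq_eq_sq₀ (norm_nonneg _) (norm_nonneg _), WithLp.prod_norm_sq_eq_of_L2]
      simp
    simpa only [hn] using h
  · rw [show (2 * p + 1) / 2 = p by omega]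
    exact main_odd p k _ (finrank_euclideanSpace_fin) N x hx c hc
end
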